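/- arXiv:2411.03516 — 2 statements merged into one kernel-verified Lean document; each statement's English description precedes it below -/
import Mathlib

section
/- There exists an open set O ⊆ (1,∞) whose complement (1,∞)∖O has Hausdorff dimension zero, such that the critical value function τ is real-analytic, strictly convex and strictly decreasing on each connected component of O. -/
open Set Filter MeasureTheory Topology

noncomputable section

/-- The β-transformation `x ↦ βx - ⌊βx⌋`. -/
def Tbeta (β x : ℝ) : ℝ := Int.fract (β * x)

/-- The survivor set `K_β(t)`: points of `[0,1)` whose orbit never enters `[0,t)`. -/
def survivor (β t : ℝ) : Set ℝ :=
  {x | x ∈ Set.Ico (0 : ℝ) 1 ∧ ∀ n : ℕ, t ≤ (Tbeta β)^[n] x}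

/-- The set-valued bifurcation set `E_β`. -/
def Ebif (β : ℝ) : Set ℝ :=
  {t | t ∈ Set.Ico (0 : ℝ) 1 ∧ ∀ t' : ℝ, t < t' → survivor β t' ≠ survivor β t}

/-- `(c)_β = Σ_{i≥1} c_i β^{-i}` for an infinite digit sequence (indexed from `0`). -/
def valSeq (β : ℝ) (c : ℕ → ℕ) : ℝ := ∑' i : ℕ, (c i : ℝ) / β ^ (i + 1)

/-- `(w 0^∞)_β` for a finite word `w`. -/
def valWord (β : ℝ) (w : List ℕ) : ℝ :=
  ∑ i ∈ Finset.range w.length, (w.getD i 0 : ℝ) / β ^ (i + 1)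

/-- `w⁺`: increment the last letter of `w`. -/
def wplus (w : List ℕ) : List ℕ := w.dropLast ++ [w.getLast! + 1]

/-- `w⁻`: decrement the last letter of `w`. -/
def wminus (w : List ℕ) : List ℕ := w.dropLast ++ [w.getLast! - 1]

/-- `θ`: increment every digit of `w` by one. -/
def theta (w : List ℕ) : List ℕ := w.map (· + 1)

/-- `L(w)`: the lexicographically largest cyclic permutation of `w`. -/
def maxCyc (w : List ℕ) : List ℕ := ((List.range w.length).map w.rotate).foldl max []

/-- `w^∞`: the periodic sequence with period block `w`. -/
def perSeq (w : List ℕ) : ℕ → ℕ := fun i => w.getD (i % w.length) 0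

/-- The sequence given by the word `w` followed by the sequence `c`. -/
def wordSeq (w : List ℕ) (c : ℕ → ℕ) : ℕ → ℕ :=
  fun i => if i < w.length then w.getD i 0 else c (i - w.length)

/-- Strict lexicographic order `≺` on sequences. -/
def seqLt (x y : ℕ → ℕ) : Prop := ∃ n, (∀ i < n, x i = y i) ∧ x n < y n

/-- Lexicographic order `≼` on sequences. -/
def seqLe (x y : ℕ → ℕ) : Prop := x = y ∨ seqLt x y

/-- The `n`-fold left shift `σⁿ` on sequences. -/
def shiftn (n : ℕ) (x : ℕ → ℕ) : ℕ → ℕ := fun i => x (i + n)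

/-- One step of the Farey recursion: insert the concatenation `w_i w_{i+1}`
between consecutive entries. -/
def fareyInsert : List (List ℕ) → List (List ℕ)
  | [] => []
  | [w] => [w]
  | w :: v :: rest => w :: (w ++ v) :: fareyInsert (v :: rest)

/-- The ordered set `F_n` of Farey words of level `n`. -/
def fareyLevel : ℕ → List (List ℕ)
  | 0 => [[0], [1]]
  | n + 1 => fareyInsert (fareyLevel n)

/-- `F`: all Farey words of length at least two. -/
def FareySet : Set (List ℕ) := {w | (∃ n, w ∈ fareyLevel n) ∧ w ≠ [0] ∧ w ≠ [1]}

/-- `F̂ = F ∪ {1}`. -/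
def FareyHat : Set (List ℕ) := FareySet ∪ {[1]}

/-- The extended Farey set `F_e = {θ^k(w) : w ∈ F̂, k ≥ 0}`. -/
def FareyExt : Set (List ℕ) := {w | ∃ v ∈ FareyHat, ∃ k : ℕ, w = theta^[k] v}

/-- A nonempty word is Lyndon iff it is strictly smaller than each of its nontrivial
cyclic rotations (equivalently: aperiodic and lexicographically smallest among its
cyclic permutations). -/
def IsLyndon (w : List ℕ) : Prop := w ≠ [] ∧ ∀ i, 0 < i → i < w.length → w < w.rotate i

/-- `L_e`: all Lyndon words over `ℕ ∪ {0}` except the single-letter word `0`. -/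
def LyndonExt : Set (List ℕ) := {w | IsLyndon w ∧ w ≠ [0]}

/-- `L`: Lyndon words over `{0,1}` of length at least `2`. -/
def LyndonBin : Set (List ℕ) := {w | IsLyndon w ∧ 2 ≤ w.length ∧ ∀ d ∈ w, d ≤ 1}

/-- The block of `Φ_s` emitted for current digit `d` after previous digit `p`:
`L(s)` for `00`, `s⁻` for `10`, `L(s)⁺` for `01`, `s` for `11`. -/
def phiBlock (s : List ℕ) (p d : ℕ) : List ℕ :=
  if d = 0 then (if p = 0 then maxCyc s else wminus s)
  else (if p = 0 then wplus (maxCyc s) else s)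

def phiAux (s : List ℕ) : ℕ → List ℕ → List ℕ
  | _, [] => []
  | p, d :: rest => phiBlock s p d ++ phiAux s d rest

/-- The substitution `Φ_s` on finite words; `s • r = subst s r`.  An initial digit `0`
produces `s⁻`, an initial digit `1` produces `L(s)⁺`, and thereafter runs
`0^k` resp. `1^l` produce `L(s)^{k-1}` resp. `s^{l-1}`, in accordance with
`Φ_s(0^{k₁}1^{l₁}…) = s⁻ L(s)^{k₁-1} L(s)⁺ s^{l₁-1} …` and
`Φ_s(1^{k₁}0^{l₁}…) = L(s)⁺ s^{k₁-1} s⁻ L(s)^{l₁-1} …`. -/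
def subst (s r : List ℕ) : List ℕ :=
  match r with
  | [] => []
  | d :: rest => phiBlock s (1 - d) d ++ phiAux s d rest

/-- The substitution `Φ_s` on infinite sequences, as the limit of its values
on initial segments (each digit contributes a nonempty block, so the `i`-th letter
is determined by the first `i+1` digits). -/
def phiSeq (s : List ℕ) (c : ℕ → ℕ) : ℕ → ℕ :=
  fun i => (subst s (List.ofFn fun j : Fin (i + 1) => c j)).getD i 0

/-- `Λ_e(m) = {s₁ • s₂ • … • s_m : s₁ ∈ F_e, s₂,…,s_m ∈ F}`. -/
def LambdaE (m : ℕ) : Set (List ℕ) :=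
  {w | ∃ s₁ ∈ FareyExt, ∃ rs : List (List ℕ),
    rs.length = m - 1 ∧ (∀ r ∈ rs, r ∈ FareySet) ∧ w = rs.foldl subst s₁}

/-- `Λ_e = ∪_{m≥1} Λ_e(m)`. -/
def LambdaExt : Set (List ℕ) := ⋃ m ∈ Set.Ici 1, LambdaE m

/-- `β_ℓ^S`: the base `β > 1` with `(L(S)^∞)_β = 1` (it is unique since
`β ↦ (c)_β` is strictly decreasing). -/
def betaL (S : List ℕ) : ℝ :=
  Classical.epsilon fun β : ℝ => 1 < β ∧ valSeq β (perSeq (maxCyc S)) = 1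

/-- `β_*^S`: the base `β > 1` with `(L(S)⁺ S⁻ L(S)^∞)_β = 1`. -/
def betaStar (S : List ℕ) : ℝ :=
  Classical.epsilon fun β : ℝ =>
    1 < β ∧ valSeq β (wordSeq (wplus (maxCyc S) ++ wminus S) (perSeq (maxCyc S))) = 1

/-- `β_r^S`: the base `β > 1` with `(L(S)⁺ S^∞)_β = 1`. -/
def betaR (S : List ℕ) : ℝ :=
  Classical.epsilon fun β : ℝ => 1 < β ∧ valSeq β (wordSeq (wplus (maxCyc S)) (perSeq S)) = 1

/-- The Lyndon/Farey interval `J^S = [β_ℓ^S, β_r^S]`. -/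
def Jint (S : List ℕ) : Set ℝ := Set.Icc (betaL S) (betaR S)

/-- The basic interval `I^S = [β_ℓ^S, β_*^S]`. -/
def Iint (S : List ℕ) : Set ℝ := Set.Icc (betaL S) (betaStar S)

/-- The exceptional set `E = (1,∞) ∖ ∪_{s ∈ F_e} J^s`. -/
def Eexc : Set ℝ := Set.Ioi 1 \ ⋃ s ∈ FareyExt, Jint s

/-- The relative exceptional set `E^S = (J^S ∖ I^S) ∖ ∪_{r ∈ F} J^{S•r}`. -/
def EexcRel (S : List ℕ) : Set ℝ :=
  (Jint S \ Iint S) \ ⋃ r ∈ FareySet, Jint (subst S r)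

/-- The infinitely renormalizable set `E_∞ = ∩_{m≥1} ∪_{S ∈ Λ_e(m)} J^S`. -/
def Einf : Set ℝ := ⋂ m ∈ Set.Ici 1, ⋃ S ∈ LambdaE m, Jint S

/-- `E_L = E ∪ {β_ℓ^s : s ∈ F_e}`. -/
def EL : Set ℝ := Eexc ∪ {x | ∃ s ∈ FareyExt, x = betaL s}

/-- The critical value `τ(β) = min{t > 0 : dim_H K_β(t) = 0}`. -/
def tau (β : ℝ) : ℝ := sInf {t : ℝ | 0 < t ∧ dimH (survivor β t) = 0}

end

/-! Let `a` and `b` be the quasi-greedy digits of `τ(β)` and of `1` in base `β`. The points of the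
survivor set of `t` correspond to the sequences all of whose shifts lie lexicographically between
the digits of `t` and `b`. The words allowed by `a` and `b` grow subexponentially: otherwise
Hofbauer's Markov diagram of `(a, b)` has two different loops of equal length at one state. These
yield a full binary family of sequences that survive some threshold above `τ(β)`, and the
dimension there would be positive.

The digits `a` depend monotonically on `β`. Where they are locally constant, `τ(β) = ∑ aᵢ β⁻ⁱ⁻¹`
is analytic, strictly convex and strictly decreasing. Elsewhere, up to the countably many
discontinuities of `β ↦ (a, b)`, all shifts of the digits `b` of `1` dominate `a`. Thus long factors
of `b` are among the subexponentially many words allowed by the digits of a nearby base, and the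
bases in question form a set of dimension zero. -/

section LabelledGraph

variable {A S : Type*} (δ : A → S → S) (E : Set (A × S))

/-- The letters of `v`, newest first, label a walk from the state `u`: the letter `d` may be read
in the state `s` when `(d, s) ∈ E`, and leads to `δ d s`. Thus `v.foldr δ u` is the final state. -/
def IsWalk (u : S) : List A → Prop
  | [] => True
  | d :: v => IsWalk u v ∧ (d, v.foldr δ u) ∈ E

/-- The label words of the walks of length `n` from `u`. -/
def walks (u : S) (n : ℕ) : Set (List A) := {v | v.length = n ∧ IsWalk δ E u v}

/-- The number of walks of length `n` is `O(l ^ n)`, uniformly in the starting state. -/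
def WalksGrowAtMost (l : ℝ) : Prop :=
  ∃ K : ℝ, 0 ≤ K ∧ ∀ u n, ((walks δ E u n).ncard : ℝ) ≤ K * l ^ n

/-- The graph `E` without the edges that lead into `V`. -/
def edgesAvoiding (V : Set S) : Set (A × S) := {e ∈ E | δ e.1 e.2 ∉ V}

variable {δ E}

lemma isWalk_append {u : S} {v w : List A} :
    IsWalk δ E u (v ++ w) ↔ IsWalk δ E u w ∧ IsWalk δ E (w.foldr δ u) v := by
  induction v with
  | nil => simp only [List.nil_append, IsWalk, and_true]
  | cons d v ih => simp only [List.cons_append, IsWalk, ih, List.foldr_append, and_assoc]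

lemma IsWalk.mono {E' : Set (A × S)} (hEE' : E ⊆ E') {u : S} {v : List A}
    (hv : IsWalk δ E u v) : IsWalk δ E' u v := by
  induction v with
  | nil => trivial
  | cons d v ih => exact ⟨ih hv.1, hEE' hv.2⟩

lemma IsWalk.foldr_notMem {V : Set S} {u : S} {v v' : List A}
    (hv : IsWalk δ (edgesAvoiding δ E V) u v) (hv' : v' <:+ v) (hne : v' ≠ []) :
    v'.foldr δ u ∉ V := by
  obtain ⟨w, rfl⟩ := hv'
  cases v' with
  | nil => exact absurd rfl hne
  | cons d v' => exact (isWalk_append.1 hv).1.2.2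

lemma walks_add_subset (u : S) (n k : ℕ) :
    walks δ E u (n + k) ⊆ ⋃ v ∈ walks δ E u k, (· ++ v) '' walks δ E (v.foldr δ u) n := by
  rintro v ⟨hlength, hwalk⟩
  rw [← List.take_append_drop n v] at hwalk
  obtain ⟨hdrop, htake⟩ := isWalk_append.1 hwalk
  exact mem_biUnion (x := v.drop n) ⟨by simp [hlength], hdrop⟩
    ⟨v.take n, ⟨by simp [hlength], htake⟩, List.take_append_drop n v⟩

lemma walks_zero (u : S) : walks δ E u 0 = {[]} := by
  ext v
  constructor
  · exact fun hv => List.length_eq_zero_iff.1 hv.1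
  · rintro rfl
    exact ⟨rfl, trivial⟩

lemma walks_one_subset (u : S) : walks δ E u 1 ⊆ (fun d => [d]) '' (Prod.fst '' E) := by
  rintro v ⟨hlength, hwalk⟩
  obtain ⟨d, rfl⟩ := List.length_eq_one_iff.1 hlength
  exact ⟨d, ⟨_, hwalk.2, rfl⟩, rfl⟩

lemma finite_walks (hE : (Prod.fst '' E).Finite) (u : S) (n : ℕ) : (walks δ E u n).Finite := by
  induction n generalizing u with
  | zero => exact walks_zero (δ := δ) (E := E) u ▸ finite_singleton []
  | succ n ih =>
    refine Finite.subset (Finite.biUnion ?_ fun v _ => ?_) (walks_add_subset u n 1)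
    · exact (hE.image _).subset (walks_one_subset u)
    · exact (ih _).image _

lemma ncard_le_mul_of_subset_biUnion {α ι : Type*} {X : Set α} {P : Set ι} {F : ι → Set α} {B : ℝ}
    (hP : P.Finite) (hX : X ⊆ ⋃ i ∈ P, F i) (hF : ∀ i ∈ P, (F i).Finite)
    (hB : ∀ i ∈ P, ((F i).ncard : ℝ) ≤ B) : (X.ncard : ℝ) ≤ P.ncard * B := by
  classical
  have hunion : (⋃ i ∈ P, F i) = ⋃ i ∈ hP.toFinset, F i := by simp only [hP.mem_toFinset]
  have hsum : X.ncard ≤ ∑ i ∈ hP.toFinset, (F i).ncard :=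
    (ncard_le_ncard hX (hP.biUnion hF)).trans
      (hunion ▸ Finset.set_ncard_biUnion_le hP.toFinset F)
  calc (X.ncard : ℝ) ≤ ∑ i ∈ hP.toFinset, ((F i).ncard : ℝ) := by exact_mod_cast hsum
    _ ≤ ∑ _i ∈ hP.toFinset, B := Finset.sum_le_sum fun i hi => hB i (hP.mem_toFinset.1 hi)
    _ = P.ncard * B := by rw [Finset.sum_const, nsmul_eq_mul, ncard_eq_toFinset_card P hP]

lemma ncard_walks_add_le (hE : (Prod.fst '' E).Finite) {n : ℕ} {B : ℝ}
    (hB : ∀ u, ((walks δ E u n).ncard : ℝ) ≤ B) (u : S) (k : ℕ) :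
    ((walks δ E u (n + k)).ncard : ℝ) ≤ (walks δ E u k).ncard * B :=
  ncard_le_mul_of_subset_biUnion (finite_walks hE u k) (walks_add_subset u n k)
    (fun _ _ => (finite_walks hE _ n).image _)
    fun _ _ => le_trans (by exact_mod_cast ncard_image_le (finite_walks hE _ n)) (hB _)

lemma ncard_walks_le_pow (hE : (Prod.fst '' E).Finite) (u : S) (n : ℕ) :
    ((walks δ E u n).ncard : ℝ) ≤ ((Prod.fst '' E).ncard : ℝ) ^ n := by
  induction n generalizing u with
  | zero => simp [walks_zero]
  | succ n ih =>
    have hone : (walks δ E u 1).ncard ≤ (Prod.fst '' E).ncard :=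
      (ncard_le_ncard (walks_one_subset u) (hE.image _)).trans (ncard_image_le hE)
    calc ((walks δ E u (n + 1)).ncard : ℝ)
        ≤ (walks δ E u 1).ncard * ((Prod.fst '' E).ncard : ℝ) ^ n := ncard_walks_add_le hE ih u 1
      _ ≤ (Prod.fst '' E).ncard * ((Prod.fst '' E).ncard : ℝ) ^ n := by gcongr
      _ = ((Prod.fst '' E).ncard : ℝ) ^ (n + 1) := (pow_succ' _ n).symm

lemma walksGrowAtMost_of_ncard_le_pow (hE : (Prod.fst '' E).Finite) {m : ℕ} (hm : 0 < m) {l : ℝ}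
    (hl : 1 ≤ l) (hwalks : ∀ u, ((walks δ E u m).ncard : ℝ) ≤ l ^ m) :
    WalksGrowAtMost δ E l := by
  refine ⟨(((Prod.fst '' E).ncard : ℝ) + 1) ^ m, by positivity, fun u n => ?_⟩
  induction n using Nat.strong_induction_on generalizing u with
  | _ n ih =>
    rcases lt_or_ge n m with hnm | hmn
    · calc ((walks δ E u n).ncard : ℝ)
          ≤ ((Prod.fst '' E).ncard : ℝ) ^ n := ncard_walks_le_pow hE u n
        _ ≤ (((Prod.fst '' E).ncard : ℝ) + 1) ^ n := by
          gcongr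
          exact le_add_of_nonneg_right one_pos.le
        _ ≤ (((Prod.fst '' E).ncard : ℝ) + 1) ^ m :=
          pow_le_pow_right₀ (le_add_of_nonneg_left (Nat.cast_nonneg _)) hnm.le
        _ ≤ (((Prod.fst '' E).ncard : ℝ) + 1) ^ m * l ^ n :=
          le_mul_of_one_le_right (by positivity) (one_le_pow₀ hl)
    · obtain ⟨k, rfl⟩ := Nat.exists_eq_add_of_le' hmn
      calc ((walks δ E u (k + m)).ncard : ℝ)
          ≤ (walks δ E u m).ncard * ((((Prod.fst '' E).ncard : ℝ) + 1) ^ m * l ^ k) :=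
            ncard_walks_add_le hE (fun w => ih k (Nat.lt_add_of_pos_right hm) w) u m
        _ ≤ l ^ m * ((((Prod.fst '' E).ncard : ℝ) + 1) ^ m * l ^ k) := by gcongr; exact hwalks u
        _ = (((Prod.fst '' E).ncard : ℝ) + 1) ^ m * l ^ (k + m) := by ring

lemma IsWalk.eq_append_first_visit (x : S) {u : S} {v : List A} (hv : IsWalk δ E u v) :
    IsWalk δ (edgesAvoiding δ E {x}) u v ∨
      ∃ v₂ d v₁, v = v₂ ++ d :: v₁ ∧ IsWalk δ (edgesAvoiding δ E {x}) u v₁ ∧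
        d ∈ Prod.fst '' E ∧ δ d (v₁.foldr δ u) = x ∧ IsWalk δ E x v₂ := by
  induction v with
  | nil => exact .inl trivial
  | cons d v ih =>
    rcases ih hv.1 with hleft | ⟨v₂, e, v₁, rfl, hv₁, he, hx, hv₂⟩
    · by_cases hx : δ d (v.foldr δ u) = x
      · exact .inr ⟨[], d, v, rfl, hleft, ⟨_, hv.2, rfl⟩, hx, trivial⟩
      · exact .inl ⟨hleft, hv.2, hx⟩
    · refine .inr ⟨d :: v₂, e, v₁, rfl, hv₁, he, hx, hv₂, ?_⟩
      simpa only [List.foldr_append, List.foldr_cons, hx] using hv.2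

lemma IsWalk.eq_append_last_visit {x : S} {v : List A} (hv : IsWalk δ E x v) :
    ∃ v₃ v₂, v = v₃ ++ v₂ ∧ IsWalk δ E x v₂ ∧ v₂.foldr δ x = x ∧
      IsWalk δ (edgesAvoiding δ E {x}) x v₃ := by
  induction v with
  | nil => exact ⟨[], [], rfl, trivial, rfl, trivial⟩
  | cons d v ih =>
    obtain ⟨v₃, v₂, rfl, hv₂, hloop, hv₃⟩ := ih hv.1
    have hfold : (v₃ ++ v₂).foldr δ x = v₃.foldr δ x := by rw [List.foldr_append, hloop]
    by_cases hx : δ d ((v₃ ++ v₂).foldr δ x) = x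
    · exact ⟨[], d :: (v₃ ++ v₂), rfl, hv, hx, trivial⟩
    · exact ⟨d :: v₃, v₂, rfl, hv₂, hloop, hv₃, hfold ▸ ⟨hv.2, hx⟩⟩

variable (δ E) in
/-- The label words of the loops of length `n` at `x`. -/
def loops (x : S) (n : ℕ) : Set (List A) := {v ∈ walks δ E x n | v.foldr δ x = x}

variable (δ E) in
/-- The words of length `n` that enter `x` for the first time at step `i + 1`, perform a loop of
length `j` at `x` and avoid `x` afterwards. -/
def walksThrough (x u : S) (n i j : ℕ) : Set (List A) :=
  (fun p : (List A × A) × List A × List A => p.2.2 ++ p.2.1 ++ p.1.2 :: p.1.1) ''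
    ((walks δ (edgesAvoiding δ E {x}) u i ×ˢ (Prod.fst '' E)) ×ˢ
      (loops δ E x j ×ˢ walks δ (edgesAvoiding δ E {x}) x (n - (i + 1 + j))))

lemma walks_subset_union_walksThrough (x u : S) (n : ℕ) :
    walks δ E u n ⊆ walks δ (edgesAvoiding δ E {x}) u n ∪
      ⋃ ij ∈ Iic n ×ˢ Iic n, walksThrough δ E x u n ij.1 ij.2 := by
  rintro v ⟨rfl, hv⟩
  rcases hv.eq_append_first_visit x with hleft | ⟨w, d, v₁, rfl, hv₁, hd, -, hw⟩
  · exact .inl ⟨rfl, hleft⟩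
  · obtain ⟨v₃, v₂, rfl, hv₂, hloop, hv₃⟩ := hw.eq_append_last_visit
    refine .inr (mem_biUnion (x := (v₁.length, v₂.length)) ?_
      ⟨((v₁, d), v₂, v₃), ⟨⟨⟨rfl, hv₁⟩, hd⟩, ⟨⟨rfl, hv₂⟩, hloop⟩, ?_, hv₃⟩, rfl⟩)
    · simp only [mem_prod, mem_Iic, List.length_append, List.length_cons]
      omega
    · simp only [List.length_append, List.length_cons]
      omega

lemma finite_loops (hE : (Prod.fst '' E).Finite) (x : S) (n : ℕ) : (loops δ E x n).Finite :=
  (finite_walks hE x n).subset (sep_subset _ _)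

lemma finite_letters_edgesAvoiding (hE : (Prod.fst '' E).Finite) (V : Set S) :
    (Prod.fst '' edgesAvoiding δ E V).Finite :=
  hE.subset (image_mono (sep_subset _ _))

lemma finite_walksThrough (hE : (Prod.fst '' E).Finite) (x u : S) (n i j : ℕ) :
    (walksThrough δ E x u n i j).Finite :=
  have hE' := finite_letters_edgesAvoiding (δ := δ) hE {x}
  .image _ (((finite_walks hE' u i).prod hE).prod
    ((finite_loops hE x j).prod (finite_walks hE' x _)))

lemma ncard_walksThrough_le (hE : (Prod.fst '' E).Finite) {x : S}
    (hloops : ∀ n, (loops δ E x n).Subsingleton) {K l : ℝ} (hK : 0 ≤ K) (hl : 1 ≤ l)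
    (hgrow : ∀ u n, ((walks δ (edgesAvoiding δ E {x}) u n).ncard : ℝ) ≤ K * l ^ n) (u : S)
    {n i : ℕ} (hi : i ≤ n) (j : ℕ) :
    ((walksThrough δ E x u n i j).ncard : ℝ) ≤ (Prod.fst '' E).ncard * K ^ 2 * l ^ n := by
  have hE' := finite_letters_edgesAvoiding (δ := δ) hE {x}
  have hprod : (walksThrough δ E x u n i j).ncard ≤
      (walks δ (edgesAvoiding δ E {x}) u i).ncard * (Prod.fst '' E).ncard *
        ((loops δ E x j).ncard * (walks δ (edgesAvoiding δ E {x}) x (n - (i + 1 + j))).ncard) :=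
    (ncard_image_le (((finite_walks hE' u i).prod hE).prod
      ((finite_loops hE x j).prod (finite_walks hE' x _)))).trans_eq (by simp only [ncard_prod])
  have hloop : ((loops δ E x j).ncard : ℝ) ≤ 1 := by
    exact_mod_cast (ncard_le_one (finite_loops hE x j)).2 fun _ hv _ hw => hloops j hv hw
  calc ((walksThrough δ E x u n i j).ncard : ℝ)
      ≤ (walks δ (edgesAvoiding δ E {x}) u i).ncard * (Prod.fst '' E).ncard *
          ((loops δ E x j).ncard *
            (walks δ (edgesAvoiding δ E {x}) x (n - (i + 1 + j))).ncard) := by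
        exact_mod_cast hprod
    _ ≤ K * l ^ i * (Prod.fst '' E).ncard * (1 * (K * l ^ (n - (i + 1 + j)))) := by
        gcongr
        · exact hgrow u i
        · exact hgrow x _
    _ = (Prod.fst '' E).ncard * K ^ 2 * l ^ (i + (n - (i + 1 + j))) := by rw [pow_add]; ring
    _ ≤ (Prod.fst '' E).ncard * K ^ 2 * l ^ n := by
        gcongr
        omega

lemma isLittleO_succ_pow_const_pow {r : ℝ} (hr : 1 < r) (k : ℕ) :
    (fun n : ℕ => ((n : ℝ) + 1) ^ k) =o[atTop] fun n => r ^ n := by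
  have hshift := (isLittleO_pow_const_const_pow_of_one_lt (R := ℝ) k hr).comp_tendsto
    (tendsto_add_atTop_nat 1)
  have hconst : (fun n : ℕ => r ^ (n + 1)) =O[atTop] fun n => r ^ n := by
    simpa only [pow_succ'] using Asymptotics.isBigO_const_mul_self r (fun n : ℕ => r ^ n) atTop
  simpa only [Function.comp_def, Nat.cast_add, Nat.cast_one] using hshift.trans_isBigO hconst

lemma exists_succ_pow_mul_pow_le {l l' : ℝ} (hl : 0 < l) (hll' : l < l') (k : ℕ) :
    ∃ C : ℝ, 0 < C ∧ ∀ n : ℕ, ((n : ℝ) + 1) ^ k * l ^ n ≤ C * l' ^ n := by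
  have hratio : 1 < l' / l := (one_lt_div hl).2 hll'
  obtain ⟨C, hC, hbound⟩ :=
    Asymptotics.bound_of_isBigO_nat_atTop (isLittleO_succ_pow_const_pow hratio k).isBigO
  refine ⟨C, hC, fun n => ?_⟩
  have hpos : 0 < (l' / l) ^ n := by positivity
  have hn := hbound hpos.ne'
  rw [Real.norm_of_nonneg (by positivity), Real.norm_of_nonneg hpos.le, div_pow,
    mul_div_assoc', le_div_iff₀ (by positivity)] at hn
  exact hn

lemma walksGrowAtMost_of_edgesAvoiding_singleton (hE : (Prod.fst '' E).Finite) {x : S}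
    (hloops : ∀ n, (loops δ E x n).Subsingleton) {l l' : ℝ} (hl : 1 ≤ l) (hll' : l < l')
    (hgrow : WalksGrowAtMost δ (edgesAvoiding δ E {x}) l) : WalksGrowAtMost δ E l' := by
  obtain ⟨K, hK, hgrow⟩ := hgrow
  obtain ⟨C, hC, hCn⟩ := exists_succ_pow_mul_pow_le (zero_lt_one.trans_le hl) hll' 2
  set B : ℝ := (Prod.fst '' E).ncard * K ^ 2
  refine ⟨K + B * C, by positivity, fun u n => ?_⟩
  set P : Set (ℕ × ℕ) := Iic n ×ˢ Iic n
  have hPfin : P.Finite := (finite_Iic n).prod (finite_Iic n)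
  have hPcard : (P.ncard : ℝ) = ((n : ℝ) + 1) ^ 2 := by
    rw [ncard_prod, ncard_Iic_nat, sq]
    push_cast
    rfl
  have hfin : ∀ ij ∈ P, (walksThrough δ E x u n ij.1 ij.2).Finite :=
    fun ij _ => finite_walksThrough hE x u n ij.1 ij.2
  have hthrough := ncard_le_mul_of_subset_biUnion hPfin subset_rfl hfin
    fun ij hij => ncard_walksThrough_le hE hloops hK hl hgrow u hij.1 ij.2
  have hunion := (ncard_le_ncard (walks_subset_union_walksThrough x u n)
    ((finite_walks (finite_letters_edgesAvoiding hE {x}) u n).union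
      (hPfin.biUnion hfin))).trans (ncard_union_le _ _)
  calc ((walks δ E u n).ncard : ℝ)
      ≤ (walks δ (edgesAvoiding δ E {x}) u n).ncard +
          (⋃ ij ∈ P, walksThrough δ E x u n ij.1 ij.2).ncard := by exact_mod_cast hunion
    _ ≤ K * l ^ n + P.ncard * (B * l ^ n) := add_le_add (hgrow u n) hthrough
    _ = K * l ^ n + B * (((n : ℝ) + 1) ^ 2 * l ^ n) := by rw [hPcard]; ring
    _ ≤ K * l' ^ n + B * (C * l' ^ n) := by
        gcongr K * ?_ + B * ?_
        exacts [pow_le_pow_left₀ (by positivity) hll'.le n, hCn n]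
    _ = (K + B * C) * l' ^ n := by ring

lemma walksGrowAtMost_of_edgesAvoiding (hE : (Prod.fst '' E).Finite)
    (hloops : ∀ x n, (loops δ E x n).Subsingleton) {V : Set S} (hV : V.Finite) {l l' : ℝ}
    (hl : 1 ≤ l) (hll' : l < l') (hgrow : WalksGrowAtMost δ (edgesAvoiding δ E V) l) :
    WalksGrowAtMost δ E l' := by
  induction V, hV using Set.Finite.induction_on generalizing l with
  | empty =>
    obtain ⟨K, hK, hgrow⟩ := hgrow
    rw [show edgesAvoiding δ E ∅ = E from sep_eq_self_iff_mem_true.2 fun _ _ => notMem_empty _]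
      at hgrow
    exact ⟨K, hK, fun u n => (hgrow u n).trans (by gcongr)⟩
  | @insert x V _ _ ih =>
    obtain ⟨l₁, hl₁, hl₁'⟩ := exists_between hll'
    refine ih (hl.trans hl₁.le) hl₁' (walksGrowAtMost_of_edgesAvoiding_singleton (x := x)
      (finite_letters_edgesAvoiding hE V) (fun n => (hloops x n).anti ?_) hl hl₁ ?_)
    · exact fun v hv => ⟨⟨hv.1.1, hv.1.2.mono (sep_subset _ _)⟩, hv.2⟩
    · convert hgrow using 1
      ext e
      simp only [edgesAvoiding, mem_ofPred_eq, mem_insert_iff, mem_singleton_iff, not_or, and_assoc,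
        and_comm]

end LabelledGraph

section InitialSegments

/-- The reversed word `a (k-1) … a 0`; words are stored with the newest letter first. -/
def revPrefix (a : ℕ → ℕ) : ℕ → List ℕ
  | 0 => []
  | k + 1 => a k :: revPrefix a k

variable {a c z : ℕ → ℕ} {n k : ℕ}

@[simp] lemma length_revPrefix (a : ℕ → ℕ) (k : ℕ) : (revPrefix a k).length = k := by
  induction k with
  | zero => rfl
  | succ k ih => rw [revPrefix, List.length_cons, ih]

lemma revPrefix_eq_revPrefix_iff : revPrefix z k = revPrefix a k ↔ ∀ i < k, z i = a i := by
  induction k with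
  | zero => simp [revPrefix]
  | succ k ih => simp only [revPrefix, List.cons.injEq, ih, Nat.forall_lt_succ_right, and_comm]

lemma revPrefix_add (z : ℕ → ℕ) (n k : ℕ) :
    revPrefix z (n + k) = revPrefix (shiftn n z) k ++ revPrefix z n := by
  induction k with
  | zero => rfl
  | succ k ih => rw [← Nat.add_assoc, revPrefix, ih, revPrefix, shiftn, Nat.add_comm k n]; rfl

lemma revPrefix_prefix_iff :
    revPrefix a k <+: revPrefix z (n + k) ↔ ∀ i < k, shiftn n z i = a i := by
  rw [revPrefix_add, ← revPrefix_eq_revPrefix_iff]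
  constructor
  · intro h
    exact (List.prefix_of_prefix_length_le (List.prefix_append _ (revPrefix z n)) h
      (by simp)).eq_of_length (by simp)
  · exact fun h => h ▸ List.prefix_append _ _

variable {F : Set (ℕ → ℕ)} {u v w : List ℕ}

/-- The reversed word `u` is an initial segment of a sequence in `F`. -/
def IsInit (F : Set (ℕ → ℕ)) (u : List ℕ) : Prop := ∃ c ∈ F, u = revPrefix c u.length

lemma isInit_revPrefix (hc : c ∈ F) (k : ℕ) : IsInit F (revPrefix c k) :=
  ⟨c, hc, by rw [length_revPrefix]⟩

lemma isInit_singleton : IsInit {c} u ↔ u = revPrefix c u.length := by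
  simp only [IsInit, mem_singleton_iff, exists_eq_left]

lemma isInit_singleton_cons {d : ℕ} :
    IsInit {c} (d :: u) ↔ d = c u.length ∧ IsInit {c} u := by
  simp only [isInit_singleton, List.length_cons, revPrefix, List.cons.injEq]

lemma isInit_insert : IsInit (insert c F) u ↔ IsInit {c} u ∨ IsInit F u := by
  simp only [IsInit, mem_insert_iff, mem_singleton_iff, exists_eq_or_imp, exists_eq_left]

lemma IsInit.of_append (h : IsInit F (v ++ u)) : IsInit F u := by
  obtain ⟨c, hc, h⟩ := h
  refine ⟨c, hc, ?_⟩
  rw [List.length_append, Nat.add_comm, revPrefix_add] at h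
  exact (List.append_inj' h (by simp)).2

lemma IsInit.append_right_cancel (hu : IsInit {c} (u ++ w)) (hv : IsInit {c} (v ++ w))
    (hlength : u.length = v.length) : u = v := by
  rw [isInit_singleton] at hu hv
  rw [List.length_append, hlength, ← List.length_append, ← hv] at hu
  exact List.append_cancel_right hu

open Classical in
/-- The longest recent part of `w` which is an initial segment of a sequence in `F`; it determines
which initial segments of sequences in `F` can still be completed. -/
noncomputable def core (F : Set (ℕ → ℕ)) (w : List ℕ) : List ℕ :=
  w.take (Nat.findGreatest (fun k => IsInit F (w.take k)) w.length)

lemma core_prefix (F : Set (ℕ → ℕ)) (w : List ℕ) : core F w <+: w := List.take_prefix _ _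

lemma isInit_core (hF : F.Nonempty) (w : List ℕ) : IsInit F (core F w) := by
  classical
  obtain ⟨c, hc⟩ := hF
  exact Nat.findGreatest_spec (P := fun k => IsInit F (w.take k)) (Nat.zero_le _) ⟨c, hc, rfl⟩

lemma IsInit.prefix_core (hu : IsInit F u) (h : u <+: w) : u <+: core F w := by
  classical
  rw [List.prefix_iff_eq_take.1 h] at hu ⊢
  exact List.take_prefix_take_left (Nat.le_findGreatest h.length_le hu)

lemma IsInit.nonempty (hu : IsInit F u) : F.Nonempty := hu.imp fun _ hc => hc.1

lemma IsInit.core_eq (hu : IsInit F u) : core F u = u :=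
  (core_prefix F u).eq_of_length_le (hu.prefix_core List.prefix_rfl).length_le

lemma IsInit.prefix_append_core_iff (hu : IsInit F u) : u <+: v ++ core F w ↔ u <+: v ++ w := by
  constructor
  · exact fun h => h.trans ((List.prefix_append_right_inj v).2 (core_prefix F w))
  · intro h
    rcases List.prefix_or_prefix_of_prefix h (List.prefix_append v w) with hshort | ⟨u', rfl⟩
    · exact hshort.trans (List.prefix_append _ _)
    · rw [List.prefix_append_right_inj] at h ⊢
      exact hu.of_append.prefix_core h

lemma core_append_core (hF : F.Nonempty) (v w : List ℕ) :
    core F (v ++ core F w) = core F (v ++ w) := by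
  have hle : core F (v ++ core F w) <+: core F (v ++ w) :=
    (isInit_core hF _).prefix_core
      ((isInit_core hF _).prefix_append_core_iff.1 (core_prefix F _))
  have hge : core F (v ++ w) <+: core F (v ++ core F w) :=
    (isInit_core hF _).prefix_core
      ((isInit_core hF _).prefix_append_core_iff.2 (core_prefix F _))
  exact hle.eq_of_length_le hge.length_le

end InitialSegments

section Admissible

variable {a b : ℕ → ℕ} {v w : List ℕ}

/-- Reversed words all of whose factors lie lexicographically between the corresponding initial
segments of `a` and `b`. -/
def IsAdmissible (a b : ℕ → ℕ) : List ℕ → Prop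
  | [] => True
  | d :: w => IsAdmissible a b w ∧ (∀ k, revPrefix a k <+: w → a k ≤ d) ∧
      ∀ k, revPrefix b k <+: w → d ≤ b k

lemma IsAdmissible.of_append (h : IsAdmissible a b (v ++ w)) : IsAdmissible a b w := by
  induction v with
  | nil => exact h
  | cons d v ih => exact ih h.1

lemma IsAdmissible.of_prefix (h : IsAdmissible a b w) (hvw : v <+: w) : IsAdmissible a b v := by
  induction v generalizing w with
  | nil => trivial
  | cons d v ih =>
    obtain ⟨w, rfl⟩ := hvw
    have hv : v <+: v ++ w := List.prefix_append v w
    exact ⟨ih h.1 hv, fun k hk => h.2.1 k (hk.trans hv), fun k hk => h.2.2 k (hk.trans hv)⟩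

lemma IsAdmissible.append_of_core (hw : IsAdmissible a b w)
    (h : IsAdmissible a b (v ++ core {a, b} w)) : IsAdmissible a b (v ++ w) := by
  induction v with
  | nil => exact hw
  | cons d v ih =>
    exact ⟨ih h.1,
      fun k hk => h.2.1 k ((isInit_revPrefix (mem_insert a {b}) k).prefix_append_core_iff.2 hk),
      fun k hk => h.2.2 k
        ((isInit_revPrefix (mem_insert_of_mem a (mem_singleton b)) k).prefix_append_core_iff.2 hk)⟩

lemma IsAdmissible.congr {a' b' : ℕ → ℕ} (h : IsAdmissible a b w)
    (ha : ∀ i < w.length, a i = a' i) (hb : ∀ i < w.length, b i = b' i) :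
    IsAdmissible a' b' w := by
  have hrev : ∀ {x y : ℕ → ℕ} {k n : ℕ}, (∀ i < n + 1, x i = y i) → k ≤ n →
      revPrefix y k = revPrefix x k :=
    fun hxy hkn => revPrefix_eq_revPrefix_iff.2 fun i hi => (hxy i (by omega)).symm
  induction w with
  | nil => trivial
  | cons d w ih =>
    refine ⟨ih h.1 (fun i hi => ha i (Nat.lt_succ_of_lt hi))
      (fun i hi => hb i (Nat.lt_succ_of_lt hi)), fun k hk => ?_, fun k hk => ?_⟩
    · have hkw : k ≤ w.length := by simpa using hk.length_le
      exact ha k (Nat.lt_succ_of_le hkw) ▸ h.2.1 k (hrev ha hkw ▸ hk)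
    · have hkw : k ≤ w.length := by simpa using hk.length_le
      exact hb k (Nat.lt_succ_of_le hkw) ▸ h.2.2 k (hrev hb hkw ▸ hk)

lemma IsAdmissible.le_of_mem (h : IsAdmissible a b w) : ∀ d ∈ w, d ≤ b 0 := by
  induction w with
  | nil => exact fun d hd => absurd hd List.not_mem_nil
  | cons e w ih =>
    rintro d (_ | ⟨_, hd⟩)
    · exact h.2.2 0 List.nil_prefix
    · exact ih h.1 d hd

lemma toLex_le_iff_forall {x y : ℕ → ℕ} :
    toLex x ≤ toLex y ↔ ∀ k, (∀ i < k, y i = x i) → x k ≤ y k := by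
  constructor
  · intro hle k hk
    by_contra! hlt
    exact not_lt_of_ge hle ⟨k, hk, hlt⟩
  · intro h
    by_contra! hlt
    obtain ⟨k, hk, hlt⟩ := hlt
    exact not_lt_of_ge (h k hk) hlt

lemma forall_toLex_le_shiftn_iff {x y : ℕ → ℕ} :
    (∀ n, toLex x ≤ toLex (shiftn n y)) ↔
      ∀ m k, revPrefix x k <+: revPrefix y m → x k ≤ y m := by
  simp only [toLex_le_iff_forall, ← revPrefix_prefix_iff]
  constructor
  · intro h m k hk
    obtain ⟨n, rfl⟩ := Nat.exists_eq_add_of_le' (by simpa using hk.length_le : k ≤ m)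
    exact Nat.add_comm k n ▸ h n k hk
  · exact fun h n k hk => (h (n + k) k hk).trans_eq (congrArg y (Nat.add_comm n k))

lemma forall_toLex_shiftn_le_iff {x y : ℕ → ℕ} :
    (∀ n, toLex (shiftn n y) ≤ toLex x) ↔
      ∀ m k, revPrefix x k <+: revPrefix y m → y m ≤ x k := by
  simp only [toLex_le_iff_forall, @eq_comm ℕ (x _), ← revPrefix_prefix_iff]
  constructor
  · intro h m k hk
    obtain ⟨n, rfl⟩ := Nat.exists_eq_add_of_le' (by simpa using hk.length_le : k ≤ m)
    exact Nat.add_comm k n ▸ h n k hk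
  · exact fun h n k hk => (congrArg y (Nat.add_comm k n)).trans_le (h (n + k) k hk)

lemma forall_isAdmissible_revPrefix_iff {z : ℕ → ℕ} :
    (∀ m, IsAdmissible a b (revPrefix z m)) ↔
      (∀ n, toLex a ≤ toLex (shiftn n z)) ∧ ∀ n, toLex (shiftn n z) ≤ toLex b := by
  rw [forall_toLex_le_shiftn_iff, forall_toLex_shiftn_le_iff]
  constructor
  · exact fun h => ⟨fun m => (h (m + 1)).2.1, fun m => (h (m + 1)).2.2⟩
  · rintro ⟨ha, hb⟩ m
    induction m with
    | zero => trivial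
    | succ m ih => exact ⟨ih, ha m, hb m⟩

end Admissible

section Deviation

variable {a b c e f : ℕ → ℕ} {u v w : List ℕ}

/-- Once an admissible word deviates from `c`, no nonempty recent part of it is an initial segment
of `c`. -/
def Deviates (a b c : ℕ → ℕ) : Prop :=
  ∀ k d, IsAdmissible a b (d :: revPrefix c k) → d ≠ c k →
    ∀ j, ¬ revPrefix c (j + 1) <+: d :: revPrefix c k

lemma deviates_left (ha : ∀ n, toLex a ≤ toLex (shiftn n a)) : Deviates a b a := by
  intro k d hadm hd j hj
  obtain ⟨rfl, hj'⟩ := List.cons_prefix_cons.1 (show a j :: revPrefix a j <+: _ from hj)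
  exact hd ((forall_toLex_le_shiftn_iff.1 ha k j hj').antisymm (hadm.2.1 k List.prefix_rfl))

lemma deviates_right (hb : ∀ n, toLex (shiftn n b) ≤ toLex b) : Deviates a b b := by
  intro k d hadm hd j hj
  obtain ⟨rfl, hj'⟩ := List.cons_prefix_cons.1 (show b j :: revPrefix b j <+: _ from hj)
  exact hd ((hadm.2.2 k List.prefix_rfl).antisymm (forall_toLex_shiftn_le_iff.1 hb k j hj'))

lemma Deviates.isInit_append_core (hf : Deviates a b f) (hadm : IsAdmissible a b (v ++ w))
    (h : ∀ v', v' <:+ v → v' ≠ [] → ∃ l, revPrefix f (l + 1) <+: v' ++ w) :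
    IsInit {f} (v ++ core {f} w) := by
  induction v with
  | nil => exact isInit_core (singleton_nonempty f) w
  | cons d v ih =>
    have hv := ih hadm.1 fun v' hv' => h v' (hv'.trans (List.suffix_cons d v))
    refine isInit_singleton_cons.2 ⟨?_, hv⟩
    obtain ⟨l, hl⟩ := h (d :: v) List.suffix_rfl (List.cons_ne_nil d v)
    replace hl : revPrefix f (l + 1) <+: d :: (v ++ core {f} w) :=
      (isInit_revPrefix (mem_singleton f) _).prefix_append_core_iff.2 hl
    have hcore : IsAdmissible a b (d :: (v ++ core {f} w)) :=
      hadm.of_prefix ((List.prefix_append_right_inj (d :: v)).2 (core_prefix _ w))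
    rw [isInit_singleton.1 hv] at hl hcore
    by_contra hd
    exact hf _ d hcore hd l hl

lemma IsInit.exists_eq_append_maximal (hu : IsInit {e} u) (v : List ℕ) :
    ∃ p q, v = p ++ q ∧ IsInit {e} (q ++ u) ∧
      ∀ p' d, p = p' ++ [d] → ¬ IsInit {e} (d :: (q ++ u)) := by
  induction v with
  | nil => exact ⟨[], [], rfl, hu, by simp⟩
  | cons d v ih =>
    obtain ⟨p, q, rfl, hq, hmax⟩ := ih
    rcases List.eq_nil_or_concat p with rfl | ⟨p', d', rfl⟩
    · by_cases hd : IsInit {e} (d :: (q ++ u))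
      · exact ⟨[], d :: q, rfl, hd, by simp⟩
      · refine ⟨[d], q, rfl, hq, fun p' d' hp' => ?_⟩
        obtain ⟨-, hdd'⟩ := List.append_inj' (s₁ := []) hp' rfl
        exact List.singleton_inj.1 hdd' ▸ hd
    · refine ⟨d :: p' ++ [d'], q, by simp, hq, fun p'' d'' hp'' => ?_⟩
      obtain ⟨-, hd''⟩ := List.append_inj' hp'' rfl
      exact hmax p' d'' (by rw [← hd'', List.concat_eq_append])

lemma Deviates.length_le_of_prefix {d : ℕ} {y : List ℕ} (he : Deviates a b e) (hw : IsInit {e} w)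
    (hadm : IsAdmissible a b (d :: w)) (hd : ¬ IsInit {e} (d :: w)) (hy : IsInit {e} y)
    (hprefix : y <+: v ++ d :: w) : y.length ≤ v.length := by
  by_contra! hlt
  obtain ⟨y', rfl⟩ := List.prefix_of_prefix_length_le (List.prefix_append v (d :: w)) hprefix hlt.le
  obtain ⟨j, hj⟩ := Nat.exists_eq_succ_of_ne_zero (n := y'.length) (by
    rw [List.length_append] at hlt
    omega)
  rw [List.prefix_append_right_inj, isInit_singleton.1 hy.of_append, hj] at hprefix
  rw [isInit_singleton_cons, not_and_or, or_iff_left (not_not_intro hw)] at hd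
  rw [isInit_singleton.1 hw] at hadm hprefix
  exact he _ d hadm hd j hprefix

/-- Once a word has deviated from `e` it can only follow `f`, so the words staying at long states
are determined by the time of the switch. -/
lemma Deviates.exists_eq_append_isInit (he : Deviates a b e) (hf : Deviates a b f)
    (hu : IsInit {e} u) (hadm : IsAdmissible a b (v ++ u))
    (hcore : ∀ v', v' <:+ v → v' ≠ [] → v.length ≤ (core {e, f} (v' ++ u)).length) :
    ∃ p q, v = p ++ q ∧ IsInit {e} (q ++ u) ∧ IsInit {f} (p ++ core {f} (q ++ u)) := by
  obtain ⟨p, q, rfl, hq, hmax⟩ := hu.exists_eq_append_maximal v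
  rw [List.append_assoc] at hadm
  refine ⟨p, q, rfl, hq, hf.isInit_append_core hadm fun p' hp' hne => ?_⟩
  have hlength : p'.length ≤ (core {e, f} (p' ++ (q ++ u))).length := by
    obtain ⟨p₀, rfl⟩ := hp'
    refine le_trans ?_ ((hcore (p' ++ q) ⟨p₀, by simp⟩ (by simp [hne])).trans_eq (by simp))
    simp only [List.length_append]
    omega
  have hprefix := core_prefix {e, f} (p' ++ (q ++ u))
  rcases isInit_insert.1 (isInit_core ⟨e, mem_insert e {f}⟩ (p' ++ (q ++ u))) with hcoree | hcoref
  · obtain ⟨p'', d, rfl⟩ := (List.eq_nil_or_concat p').resolve_left hne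
    obtain ⟨p₀, rfl⟩ := hp'
    rw [List.concat_eq_append, ← List.append_assoc] at hmax hadm
    have hle := he.length_le_of_prefix (v := p'') (d := d) hq
      (IsAdmissible.of_append (v := p₀ ++ p'') (by simpa using hadm)) (hmax _ d rfl) hcoree
      (by simpa using hprefix)
    rw [List.length_concat] at hlength
    omega
  · obtain ⟨l, hl⟩ := Nat.exists_eq_succ_of_ne_zero
      ((List.length_pos_iff.2 hne).trans_le hlength).ne'
    rw [isInit_singleton, hl] at hcoref
    exact ⟨l, hcoref ▸ hprefix⟩

lemma ncard_le_of_forall_exists_eq_append_isInit {m : ℕ} {X : Set (List ℕ)}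
    (hX : ∀ v ∈ X, v.length = m ∧ ∃ p q, v = p ++ q ∧ IsInit {e} (q ++ u) ∧
      IsInit {f} (p ++ core {f} (q ++ u))) : X.ncard ≤ m + 1 := by
  set F : ℕ → Set (List ℕ) := fun i => {v | v.length = m ∧ ∃ p q, v = p ++ q ∧ q.length = i ∧
    IsInit {e} (q ++ u) ∧ IsInit {f} (p ++ core {f} (q ++ u))}
  have hF : ∀ i, (F i).Subsingleton := by
    rintro i v ⟨hv, p, q, rfl, hqi, hq, hp⟩ w ⟨hw, p', q', rfl, hqi', hq', hp'⟩
    obtain rfl := hq.append_right_cancel hq' (hqi.trans hqi'.symm)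
    rw [List.length_append] at hv hw
    rw [hp.append_right_cancel hp' (by omega)]
  have hcard := ncard_le_mul_of_subset_biUnion (B := 1) (finite_Iic m) (X := X) (F := F)
    (fun v hv => ?_) (fun i _ => (hF i).finite)
    (fun i _ => by exact_mod_cast (ncard_le_one (hF i).finite).2 fun _ hv _ hw => hF i hv hw)
  · rw [mul_one, ncard_Iic_nat] at hcard
    exact_mod_cast hcard
  · obtain ⟨hm, p, q, rfl, hqp⟩ := hX v hv
    refine mem_biUnion (x := q.length) ?_ ⟨hm, p, q, rfl, rfl, hqp⟩
    rw [mem_Iic, ← hm, List.length_append]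
    omega

lemma ncard_admissible_extensions_le (ha : Deviates a b a) (hb : Deviates a b b)
    (hu : IsInit {a, b} u) (m : ℕ) :
    {v | v.length = m ∧ IsAdmissible a b (v ++ u) ∧ ∀ v', v' <:+ v → v' ≠ [] →
      m ≤ (core {a, b} (v' ++ u)).length}.ncard ≤ m + 1 := by
  rcases isInit_insert.1 hu with hu | hu
  · refine ncard_le_of_forall_exists_eq_append_isInit (e := a) (f := b) (u := u) ?_
    rintro v ⟨rfl, hadm, hcore⟩
    exact ⟨rfl, ha.exists_eq_append_isInit hb hu hadm hcore⟩
  · refine ncard_le_of_forall_exists_eq_append_isInit (e := b) (f := a) (u := u) ?_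
    rintro v ⟨rfl, hadm, hcore⟩
    exact ⟨rfl, hb.exists_eq_append_isInit ha hu hadm (pair_comm a b ▸ hcore)⟩

end Deviation

section HofbauerDiagram

variable {a b : ℕ → ℕ} {u v : List ℕ}

/-- The transition map of the Markov diagram whose states are the initial segments of `a` and
`b`. -/
noncomputable def hofbauerStep (a b : ℕ → ℕ) (d : ℕ) (s : List ℕ) : List ℕ := core {a, b} (d :: s)

/-- The edges of the Markov diagram whose states are the initial segments of `a` and `b`. -/
def hofbauerEdges (a b : ℕ → ℕ) : Set (ℕ × List ℕ) :=
  {e | IsInit {a, b} e.2 ∧ IsAdmissible a b (e.1 :: e.2)}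

/-- Some state of the Markov diagram carries two different loops of equal length. -/
def HasHorseshoe (a b : ℕ → ℕ) : Prop :=
  ∃ x n, (loops (hofbauerStep a b) (hofbauerEdges a b) x n).Nontrivial

/-- The admissible words of length `n`. -/
def admissibleWords (a b : ℕ → ℕ) (n : ℕ) : Set (List ℕ) := {v | v.length = n ∧ IsAdmissible a b v}

/-- The number of admissible words grows subexponentially; since it is submultiplicative in the
length, one length per growth rate suffices. -/
def ZeroGrowth (a b : ℕ → ℕ) : Prop :=
  ∀ l : ℝ, 1 < l → ∃ n, 0 < n ∧ ((admissibleWords a b n).ncard : ℝ) ≤ l ^ n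

lemma foldr_hofbauerStep (hu : IsInit {a, b} u) (v : List ℕ) :
    v.foldr (hofbauerStep a b) u = core {a, b} (v ++ u) := by
  induction v with
  | nil => exact hu.core_eq.symm
  | cons d v ih =>
    rw [List.foldr_cons, ih, hofbauerStep]
    exact core_append_core hu.nonempty [d] (v ++ u)

lemma isWalk_hofbauer_iff (hu : IsInit {a, b} u) (hadm : IsAdmissible a b u) :
    IsWalk (hofbauerStep a b) (hofbauerEdges a b) u v ↔ IsAdmissible a b (v ++ u) := by
  induction v with
  | nil => exact ⟨fun _ => hadm, fun _ => trivial⟩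
  | cons d v ih =>
    rw [IsWalk, ih, foldr_hofbauerStep hu]
    constructor
    · exact fun h => IsAdmissible.append_of_core (v := [d]) h.1 h.2.2
    · exact fun h => ⟨h.1, isInit_core hu.nonempty _,
        h.of_prefix ((List.prefix_append_right_inj [d]).2 (core_prefix _ _))⟩

lemma IsWalk.isInit_and_isAdmissible (hv : IsWalk (hofbauerStep a b) (hofbauerEdges a b) u v)
    (hne : v ≠ []) : IsInit {a, b} u ∧ IsAdmissible a b u := by
  obtain ⟨v, d, rfl⟩ := (List.eq_nil_or_concat v).resolve_left hne
  rw [List.concat_eq_append, isWalk_append] at hv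
  exact ⟨hv.1.2.1, hv.1.2.2.1⟩

lemma finite_letters_hofbauerEdges (a b : ℕ → ℕ) : (Prod.fst '' hofbauerEdges a b).Finite := by
  refine (finite_Iic (b 0)).subset ?_
  rintro _ ⟨⟨d, s⟩, hds, rfl⟩
  exact hds.2.le_of_mem d List.mem_cons_self

lemma admissibleWords_eq_walks (a b : ℕ → ℕ) (n : ℕ) :
    admissibleWords a b n = walks (hofbauerStep a b) (hofbauerEdges a b) [] n := by
  ext v
  have hnil : IsInit {a, b} [] := ⟨a, mem_insert a {b}, rfl⟩
  simp only [admissibleWords, walks, mem_ofPred_eq, isWalk_hofbauer_iff hnil trivial,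
    List.append_nil]

lemma finite_admissibleWords (a b : ℕ → ℕ) (n : ℕ) : (admissibleWords a b n).Finite :=
  admissibleWords_eq_walks a b n ▸ finite_walks (finite_letters_hofbauerEdges a b) [] n

lemma finite_isInit_length_lt (a b : ℕ → ℕ) (m : ℕ) :
    {u | IsInit {a, b} u ∧ u.length < m}.Finite := by
  refine (((finite_Iio m).image (revPrefix a)).union ((finite_Iio m).image (revPrefix b))).subset ?_
  rintro u ⟨hu, hm⟩
  exact (isInit_insert.1 hu).imp (fun h => ⟨_, hm, (isInit_singleton.1 h).symm⟩)
    fun h => ⟨_, hm, (isInit_singleton.1 h).symm⟩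

lemma ncard_walks_avoiding_short_le (ha : Deviates a b a) (hb : Deviates a b b) {m : ℕ}
    (hm : 0 < m) (u : List ℕ) :
    (walks (hofbauerStep a b) (edgesAvoiding (hofbauerStep a b) (hofbauerEdges a b)
      {s | IsInit {a, b} s ∧ s.length < m}) u m).ncard ≤ m + 1 := by
  rcases eq_empty_or_nonempty (walks (hofbauerStep a b) (edgesAvoiding (hofbauerStep a b)
    (hofbauerEdges a b) {s | IsInit {a, b} s ∧ s.length < m}) u m) with hempty | ⟨v₀, hlength, hv₀⟩
  · simp only [hempty, ncard_empty, Nat.zero_le]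
  obtain ⟨hu, hadm⟩ := (hv₀.mono (sep_subset _ _)).isInit_and_isAdmissible
    (List.length_pos_iff.1 (hlength ▸ hm))
  refine (ncard_le_ncard ?_ ?_).trans (ncard_admissible_extensions_le ha hb hu m)
  · rintro v ⟨hlength, hv⟩
    refine ⟨hlength, (isWalk_hofbauer_iff hu hadm).1 (hv.mono (sep_subset _ _)),
      fun v' hv' hne => not_lt.1 fun hlt => hv.foldr_notMem hv' hne ?_⟩
    rw [foldr_hofbauerStep hu]
    exact ⟨isInit_core hu.nonempty _, hlt⟩
  · refine (finite_walks (δ := hofbauerStep a b) (finite_letters_hofbauerEdges a b) u m).subset ?_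
    intro v hv
    exact ⟨hv.1, (isWalk_hofbauer_iff hu hadm).2 hv.2.1⟩

theorem zeroGrowth_of_not_hasHorseshoe (ha : ∀ n, toLex a ≤ toLex (shiftn n a))
    (hb : ∀ n, toLex (shiftn n b) ≤ toLex b) (hhorseshoe : ¬ HasHorseshoe a b) :
    ZeroGrowth a b := by
  intro l hl
  obtain ⟨l₂, hl₂, hl₂l⟩ := exists_between hl
  obtain ⟨l₁, hl₁, hl₁l₂⟩ := exists_between hl₂
  have hpos : 0 < l₂ := zero_lt_one.trans hl₂
  have hlong : ∀ᶠ m : ℕ in atTop, (m : ℝ) + 1 ≤ l₁ ^ m := by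
    filter_upwards [(isLittleO_succ_pow_const_pow hl₁ 1).bound one_pos] with m hm
    simpa [abs_of_pos, zero_lt_one.trans hl₁, abs_of_nonneg, add_nonneg] using hm
  obtain ⟨m, hm, hm0⟩ := (hlong.and (eventually_gt_atTop 0)).exists
  have hloops : ∀ x n, (loops (hofbauerStep a b) (hofbauerEdges a b) x n).Subsingleton :=
    fun x n => not_nontrivial_iff.1 fun h => hhorseshoe ⟨x, n, h⟩
  obtain ⟨K, -, hK⟩ : WalksGrowAtMost (hofbauerStep a b) (hofbauerEdges a b) l₂ :=
    walksGrowAtMost_of_edgesAvoiding (finite_letters_hofbauerEdges a b) hloops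
      (finite_isInit_length_lt a b m) hl₁.le hl₁l₂
      (walksGrowAtMost_of_ncard_le_pow
        (finite_letters_edgesAvoiding (finite_letters_hofbauerEdges a b) _) hm0 hl₁.le fun u =>
          (Nat.cast_le.2 (ncard_walks_avoiding_short_le (deviates_left ha) (deviates_right hb)
            hm0 u)).trans (by exact_mod_cast hm))
  obtain ⟨n, hnK, hn⟩ := (((tendsto_pow_atTop_atTop_of_one_lt
    ((one_lt_div hpos).2 hl₂l)).eventually_ge_atTop K).and (eventually_gt_atTop 0)).exists
  refine ⟨n, hn, ?_⟩
  calc ((admissibleWords a b n).ncard : ℝ) ≤ K * l₂ ^ n := admissibleWords_eq_walks a b n ▸ hK [] n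
    _ ≤ (l / l₂) ^ n * l₂ ^ n := by gcongr
    _ = l ^ n := by rw [← mul_pow, div_mul_cancel₀ l hpos.ne']

end HofbauerDiagram

section Horseshoe

variable {a b : ℕ → ℕ} {ι : Type*} {P : ℕ} {B : ι → List ℕ}

/-- The sequence that reads the words `B (c 0), B (c 1), …`, each of length `P`; as the words are
stored with the newest letter first, they are reversed. -/
def concatSeq (P : ℕ) (B : ι → List ℕ) (c : ℕ → ι) (i : ℕ) : ℕ :=
  (B (c (i / P))).reverse.getD (i % P) 0

lemma revPrefix_getD_reverse (v : List ℕ) : revPrefix (v.reverse.getD · 0) v.length = v := by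
  induction v with
  | nil => rfl
  | cons d v ih =>
    rw [List.length_cons, revPrefix, List.reverse_cons]
    congr 1
    · simp
    · refine Eq.trans (revPrefix_eq_revPrefix_iff.2 fun i hi => ?_) ih
      exact List.getD_append _ _ _ _ (by simpa using hi)

lemma revPrefix_shiftn_concatSeq (hB : ∀ e, (B e).length = P) (c : ℕ → ι) (n : ℕ) :
    revPrefix (shiftn (n * P) (concatSeq P B c)) P = B (c n) := by
  conv_rhs => rw [← revPrefix_getD_reverse (B (c n)), hB]
  refine revPrefix_eq_revPrefix_iff.2 fun i hi => ?_
  rw [shiftn, concatSeq, Nat.add_mul_div_right _ _ (Nat.zero_lt_of_lt hi),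
    Nat.add_mul_mod_self_right, Nat.div_eq_of_lt hi, Nat.mod_eq_of_lt hi, Nat.zero_add]

lemma concatSeq_injective_on_blocks (hB : ∀ e, (B e).length = P) (hinj : Function.Injective B)
    {c c' : ℕ → ι} {n : ℕ} (h : ∀ i < (n + 1) * P, concatSeq P B c i = concatSeq P B c' i) :
    c n = c' n := by
  apply hinj
  rw [← revPrefix_shiftn_concatSeq hB, ← revPrefix_shiftn_concatSeq hB, revPrefix_eq_revPrefix_iff]
  exact fun i hi => h _ (by rw [Nat.succ_mul]; omega)

section Loops

variable {S : Type*} {δ : ℕ → S → S} {E : Set (ℕ × S)} {x : S}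

lemma append_mem_loops {v w : List ℕ} {m n : ℕ} (hv : v ∈ loops δ E x m)
    (hw : w ∈ loops δ E x n) : v ++ w ∈ loops δ E x (n + m) := by
  obtain ⟨⟨rfl, hv⟩, hvx⟩ := hv
  obtain ⟨⟨rfl, hw⟩, hwx⟩ := hw
  refine ⟨⟨List.length_append.trans (Nat.add_comm _ _), isWalk_append.2 ⟨hw, hwx.symm ▸ hv⟩⟩, ?_⟩
  rw [List.foldr_append, hwx, hvx]

lemma revPrefix_concatSeq_mem_loops (hB : ∀ e, B e ∈ loops δ E x P) (c : ℕ → ι) (n : ℕ) :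
    revPrefix (concatSeq P B c) (n * P) ∈ loops δ E x (n * P) := by
  induction n with
  | zero =>
    rw [Nat.zero_mul]
    exact ⟨⟨rfl, trivial⟩, rfl⟩
  | succ n ih =>
    rw [Nat.succ_mul, revPrefix_add, revPrefix_shiftn_concatSeq fun e => (hB e).1.1]
    exact append_mem_loops (hB _) ih

lemma isWalk_revPrefix_concatSeq (hP : 0 < P) (hB : ∀ e, B e ∈ loops δ E x P) (c : ℕ → ι)
    (m : ℕ) : IsWalk δ E x (revPrefix (concatSeq P B c) m) := by
  obtain ⟨k, hk⟩ := Nat.exists_eq_add_of_le (Nat.le_mul_of_pos_right m hP)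
  have hwalk := (revPrefix_concatSeq_mem_loops hB c m).1.2
  rw [hk, revPrefix_add, isWalk_append] at hwalk
  exact hwalk.1

end Loops

lemma isAdmissible_revPrefix_concatSeq {x : List ℕ} (hP : 0 < P)
    (hB : ∀ e, B e ∈ loops (hofbauerStep a b) (hofbauerEdges a b) x P) (c : ℕ → ι) (m : ℕ) :
    IsAdmissible a b (revPrefix (concatSeq P B c) m) := by
  obtain ⟨hx, hadm⟩ := (hB (c 0)).1.2.isInit_and_isAdmissible
    (List.length_pos_iff.1 ((hB (c 0)).1.1 ▸ hP))
  exact ((isWalk_hofbauer_iff hx hadm).1 (isWalk_revPrefix_concatSeq hP hB c m)).of_prefix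
    (List.prefix_append _ x)

/-- Every `P` steps the walk is back at `x`, which bounds its states. -/
lemma length_le_of_prefix_revPrefix_concatSeq {x y : List ℕ} (hP : 0 < P)
    (hB : ∀ e, B e ∈ loops (hofbauerStep a b) (hofbauerEdges a b) x P) (c : ℕ → ι) {m : ℕ}
    (hy : IsInit {a, b} y) (hprefix : y <+: revPrefix (concatSeq P B c) m) :
    y.length ≤ P + x.length := by
  have hx := ((hB (c 0)).1.2.isInit_and_isAdmissible
    (List.length_pos_iff.1 ((hB (c 0)).1.1 ▸ hP))).1
  have hcore : core {a, b} (revPrefix (concatSeq P B c) m ++ x) =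
      core {a, b} (revPrefix (shiftn (m / P * P) (concatSeq P B c)) (m % P) ++ x) := by
    conv_lhs => rw [← Nat.div_add_mod' m P]
    rw [← foldr_hofbauerStep hx, revPrefix_add, List.foldr_append,
      (revPrefix_concatSeq_mem_loops hB c (m / P)).2, foldr_hofbauerStep hx]
  calc y.length
      ≤ (core {a, b} (revPrefix (concatSeq P B c) m ++ x)).length :=
        (hy.prefix_core (hprefix.trans (List.prefix_append _ x))).length_le
    _ ≤ m % P + x.length := by
        rw [hcore]
        exact (core_prefix _ _).length_le.trans_eq (by simp)
    _ ≤ P + x.length := by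
        gcongr
        exact (Nat.mod_lt m hP).le

lemma exists_le_and_lt_of_toLex_le {x y : ℕ → ℕ} {M : ℕ} (hle : toLex x ≤ toLex y)
    (hM : ∀ k, (∀ i < k, x i = y i) → k ≤ M) : ∃ k ≤ M, (∀ i < k, x i = y i) ∧ x k < y k := by
  rcases hle.eq_or_lt with heq | ⟨k, hk, hlt⟩
  · exact absurd (hM (M + 1) fun i _ => congrFun (toLex.injective heq) i) (Nat.not_succ_le_self M)
  · exact ⟨k, hM k hk, hk, hlt⟩

theorem HasHorseshoe.exists_family (h : HasHorseshoe a b) :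
    ∃ (P M : ℕ) (z : (ℕ → Fin 2) → ℕ → ℕ), 0 < P ∧
      (∀ c n, ∃ k ≤ M, (∀ i < k, a i = shiftn n (z c) i) ∧ a k < shiftn n (z c) k) ∧
      (∀ c n, toLex (shiftn n (z c)) < toLex b) ∧
      ∀ c c' n, (∀ i < (n + 1) * P, z c i = z c' i) → c n = c' n := by
  obtain ⟨x, P, p, hp, q, hq, hpq⟩ := h
  have hP : 0 < P := by
    rw [← hp.1.1, List.length_pos_iff]
    rintro rfl
    exact hpq (List.length_eq_zero_iff.1 (hq.1.1.trans hp.1.1.symm)).symm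
  set B : Fin 2 → List ℕ := ![p, q]
  have hB : ∀ e, B e ∈ loops (hofbauerStep a b) (hofbauerEdges a b) x P :=
    Fin.forall_fin_two.2 ⟨hp, hq⟩
  have hinj : Function.Injective B := by
    simpa [B, Function.Injective, Fin.forall_fin_two, eq_comm] using hpq
  have hle := fun c =>
    forall_isAdmissible_revPrefix_iff.1 (isAdmissible_revPrefix_concatSeq hP hB c)
  have hbound : ∀ e ∈ ({a, b} : Set (ℕ → ℕ)), ∀ c n k,
      (∀ i < k, shiftn n (concatSeq P B c) i = e i) → k ≤ P + x.length := fun e he c n k hk => by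
    simpa using length_le_of_prefix_revPrefix_concatSeq hP hB c (isInit_revPrefix he k)
      (revPrefix_prefix_iff.2 hk)
  refine ⟨P, P + x.length, concatSeq P B, hP, fun c n => ?_, fun c n => ?_,
    fun c c' n => concatSeq_injective_on_blocks (fun e => (hB e).1.1) hinj⟩
  · exact exists_le_and_lt_of_toLex_le ((hle c).1 n) fun k hk =>
      hbound a (mem_insert a {b}) c n k fun i hi => (hk i hi).symm
  · obtain ⟨k, -, hk⟩ := exists_le_and_lt_of_toLex_le ((hle c).2 n)
      (hbound b (mem_insert_of_mem a (mem_singleton b)) c n)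
    exact ⟨k, hk⟩

end Horseshoe

section Remainders

variable {β : ℝ} {c c' : ℕ → ℕ} {y y' : ℕ → ℝ} {k : ℕ}

/-- `y` is the sequence of remainders of the expansion `c` in base `β`: if
`y 0 = ∑ c i / β ^ (i + 1)`, then `y n` is the value of the tail of `c` from index `n` on. -/
def IsExpansion (β : ℝ) (c : ℕ → ℕ) (y : ℕ → ℝ) : Prop := ∀ n, y (n + 1) = β * y n - c n

lemma IsExpansion.shift (h : IsExpansion β c y) (n : ℕ) :
    IsExpansion β (shiftn n c) (fun i => y (i + n)) := fun i => by
  simpa only [shiftn, Nat.add_right_comm i 1 n] using h (i + n)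

lemma IsExpansion.sub_eq_of_agree (h : IsExpansion β c y) (h' : IsExpansion β c' y')
    (hk : ∀ i < k, c i = c' i) : y' k - y k = β ^ k * (y' 0 - y 0) := by
  induction k with
  | zero => simp
  | succ k ih =>
    rw [h k, h' k, hk k (by omega), pow_succ']
    linear_combination β * ih fun i hi => hk i (by omega)

lemma IsExpansion.one_add_sub_le (h : IsExpansion β c y) (h' : IsExpansion β c' y')
    (hk : ∀ i < k, c i = c' i) (hlt : c k < c' k) :
    1 + (y' (k + 1) - y (k + 1)) ≤ β ^ (k + 1) * (y' 0 - y 0) := by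
  have hdigit : (c k : ℝ) + 1 ≤ c' k := by exact_mod_cast hlt
  rw [h k, h' k, pow_succ']
  linear_combination hdigit + β * h.sub_eq_of_agree h' hk

lemma IsExpansion.le_of_toLex_lt (hβ : 0 < β) (h : IsExpansion β c y) (h' : IsExpansion β c' y')
    (hy : ∀ n, y n ≤ 1 + y' n) (hlt : toLex c < toLex c') : y 0 ≤ y' 0 := by
  obtain ⟨k, hk, hlt⟩ := hlt
  refine sub_nonneg.1 (nonneg_of_mul_nonneg_right ?_ (pow_pos hβ (k + 1)))
  linarith [h.one_add_sub_le h' hk hlt, hy (k + 1)]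

lemma IsExpansion.lt_of_toLex_lt (hβ : 0 < β) (h : IsExpansion β c y) (h' : IsExpansion β c' y')
    (hy : ∀ n, y n < 1 + y' n) (hlt : toLex c < toLex c') : y 0 < y' 0 := by
  obtain ⟨k, hk, hlt⟩ := hlt
  refine sub_pos.1 (pos_of_mul_pos_right ?_ (pow_pos hβ (k + 1)).le)
  linarith [h.one_add_sub_le h' hk hlt, hy (k + 1)]

lemma nonpos_of_forall_exists_mul_le {ι : Type*} {l : ℝ} (hl : 1 < l) {f : ι → ℝ}
    (hf : BddAbove (range f)) (h : ∀ i, 0 < f i → ∃ j, l * f i ≤ f j) (i : ι) : f i ≤ 0 := by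
  by_contra! hi
  have : Nonempty ι := ⟨i⟩
  have hsup : 0 < ⨆ j, f j := hi.trans_le (le_ciSup hf i)
  obtain ⟨j, hj⟩ := exists_lt_of_lt_ciSup (div_lt_self hsup hl)
  obtain ⟨m, hm⟩ := h j ((div_pos hsup (by linarith)).trans hj)
  rw [div_lt_iff₀' (by linarith)] at hj
  exact (hj.trans_le hm).not_ge (le_ciSup hf m)

lemma IsExpansion.eq_of_bounded (hβ : 1 < β) (h : IsExpansion β c y) (h' : IsExpansion β c y')
    {C : ℝ} (hC : ∀ n, |y' n - y n| ≤ C) : y' 0 = y 0 := by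
  refine sub_eq_zero.1 (abs_nonpos_iff.1 (nonpos_of_forall_exists_mul_le hβ
    (f := fun n => |y' n - y n|) ⟨C, forall_mem_range.2 hC⟩ (fun n _ => ⟨n + 1, ?_⟩) 0))
  rw [h n, h' n, sub_sub_sub_cancel_right, ← mul_sub, abs_mul, abs_of_pos (by linarith : 0 < β)]

end Remainders

section Digits

/-- The quasi-greedy β-transformation of `(0, 1]`: a remainder that would vanish is replaced by `1`.
For `0 < β * x` the truncated subtraction is exact. -/
noncomputable def quasiGreedyMap (β x : ℝ) : ℝ := β * x - ((⌈β * x⌉₊ - 1 : ℕ) : ℝ)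

/-- The quasi-greedy digits of `x` in base `β`: the lexicographically largest expansion of `x` not
ending in zeros. -/
noncomputable def quasiGreedyDigits (β x : ℝ) (n : ℕ) : ℕ := ⌈β * (quasiGreedyMap β)^[n] x⌉₊ - 1

/-- The greedy digits of `x` in base `β`: the lexicographically largest expansion of `x`. -/
noncomputable def greedyDigits (β x : ℝ) (n : ℕ) : ℕ := ⌊β * (Tbeta β)^[n] x⌋₊

variable {β x s t : ℝ}

lemma shiftn_shiftn (m n : ℕ) (z : ℕ → ℕ) : shiftn m (shiftn n z) = shiftn (m + n) z :=
  funext fun i => congrArg z (Nat.add_assoc i m n)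

lemma shiftn_quasiGreedyDigits (β x : ℝ) (n : ℕ) :
    shiftn n (quasiGreedyDigits β x) = quasiGreedyDigits β ((quasiGreedyMap β)^[n] x) := by
  funext i
  simp only [shiftn, quasiGreedyDigits, Function.iterate_add_apply]

lemma shiftn_greedyDigits (β x : ℝ) (n : ℕ) :
    shiftn n (greedyDigits β x) = greedyDigits β ((Tbeta β)^[n] x) := by
  funext i
  simp only [shiftn, greedyDigits, Function.iterate_add_apply]

lemma iterate_Tbeta_mem_Ico (β : ℝ) (hx : x ∈ Ico (0 : ℝ) 1) (n : ℕ) :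
    (Tbeta β)^[n] x ∈ Ico (0 : ℝ) 1 :=
  have hmaps : MapsTo (Tbeta β) (Ico 0 1) (Ico 0 1) :=
    fun _ _ => ⟨Int.fract_nonneg _, Int.fract_lt_one _⟩
  hmaps.iterate n hx

lemma quasiGreedyMap_mem_Ioc (hβ : 0 < β) (hx : 0 < x) : quasiGreedyMap β x ∈ Ioc (0 : ℝ) 1 := by
  have hpos : 0 < β * x := by positivity
  have hceil : 1 ≤ ⌈β * x⌉₊ := Nat.one_le_ceil_iff.2 hpos
  rw [quasiGreedyMap, Nat.cast_sub hceil, Nat.cast_one]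
  constructor <;> linarith [Nat.ceil_lt_add_one hpos.le, Nat.le_ceil (β * x)]

lemma iterate_quasiGreedyMap_mem_Ioc (hβ : 0 < β) (hx : x ∈ Ioc (0 : ℝ) 1) (n : ℕ) :
    (quasiGreedyMap β)^[n] x ∈ Ioc (0 : ℝ) 1 :=
  have hmaps : MapsTo (quasiGreedyMap β) (Ioc 0 1) (Ioc 0 1) :=
    fun _ hy => quasiGreedyMap_mem_Ioc hβ hy.1
  hmaps.iterate n hx

lemma isExpansion_quasiGreedyDigits (β x : ℝ) :
    IsExpansion β (quasiGreedyDigits β x) (fun n => (quasiGreedyMap β)^[n] x) :=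
  fun n => Function.iterate_succ_apply' _ n x

lemma isExpansion_greedyDigits (hβ : 0 < β) (hx : x ∈ Ico (0 : ℝ) 1) :
    IsExpansion β (greedyDigits β x) (fun n => (Tbeta β)^[n] x) := by
  intro n
  simp only [Function.iterate_succ_apply', greedyDigits]
  rw [natCast_floor_eq_intCast_floor (mul_nonneg hβ.le (iterate_Tbeta_mem_Ico β hx n).1)]
  rfl

lemma le_iff_toLex_quasiGreedyDigits_le (hβ : 1 < β) (ht : t ∈ Ioc (0 : ℝ) 1)
    (hx : x ∈ Ico (0 : ℝ) 1) :
    t ≤ x ↔ toLex (quasiGreedyDigits β t) ≤ toLex (greedyDigits β x) := by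
  have h0 : 0 < β := by linarith
  have hexpt := isExpansion_quasiGreedyDigits β t
  have hexpx := isExpansion_greedyDigits h0 hx
  have hmemt := iterate_quasiGreedyMap_mem_Ioc h0 ht
  have hmemx := iterate_Tbeta_mem_Ico β hx
  constructor
  · intro h
    by_contra! hlt
    exact h.not_gt (hexpx.lt_of_toLex_lt h0 hexpt
      (fun n => by linarith [(hmemx n).2, (hmemt n).1]) hlt)
  · intro h
    rcases h.eq_or_lt with heq | hlt
    · rw [toLex.injective heq] at hexpt
      exact (hexpx.eq_of_bounded hβ hexpt (C := 1) fun n => abs_le.2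
        (by constructor <;> linarith [(hmemt n).1, (hmemt n).2, (hmemx n).1, (hmemx n).2])).le
    · exact hexpt.le_of_toLex_lt h0 hexpx (fun n => by linarith [(hmemt n).2, (hmemx n).1]) hlt

lemma strictMonoOn_toLex_quasiGreedyDigits (hβ : 1 < β) :
    StrictMonoOn (fun t => toLex (quasiGreedyDigits β t)) (Ioc 0 1) := by
  intro s hs t ht hst
  have h0 : 0 < β := by linarith
  have hexps := isExpansion_quasiGreedyDigits β s
  have hexpt := isExpansion_quasiGreedyDigits β t
  have hmems := iterate_quasiGreedyMap_mem_Ioc h0 hs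
  have hmemt := iterate_quasiGreedyMap_mem_Ioc h0 ht
  by_contra! hle
  rcases hle.eq_or_lt with heq | hlt
  · rw [toLex.injective heq] at hexpt
    exact hst.ne' (hexps.eq_of_bounded hβ hexpt (C := 1) fun n => abs_le.2
      (by constructor <;> linarith [(hmemt n).1, (hmemt n).2, (hmems n).1, (hmems n).2]))
  · exact hst.not_gt (hexpt.lt_of_toLex_lt h0 hexps
      (fun n => by linarith [(hmemt n).2, (hmems n).1]) hlt)

lemma one_mem_Ioc : (1 : ℝ) ∈ Ioc (0 : ℝ) 1 := ⟨one_pos, le_rfl⟩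

lemma toLex_shiftn_quasiGreedyDigits_le (hβ : 1 < β) (ht : t ∈ Ioc (0 : ℝ) 1) (n : ℕ) :
    toLex (shiftn n (quasiGreedyDigits β t)) ≤ toLex (quasiGreedyDigits β 1) := by
  have hmem := iterate_quasiGreedyMap_mem_Ioc (by linarith : 0 < β) ht n
  rw [shiftn_quasiGreedyDigits]
  exact (strictMonoOn_toLex_quasiGreedyDigits hβ).monotoneOn hmem one_mem_Ioc hmem.2

lemma toLex_shiftn_greedyDigits_lt (hβ : 1 < β) (hx : x ∈ Ico (0 : ℝ) 1) (n : ℕ) :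
    toLex (shiftn n (greedyDigits β x)) < toLex (quasiGreedyDigits β 1) := by
  have hmem := iterate_Tbeta_mem_Ico β hx n
  refine lt_of_not_ge fun hle => ?_
  rw [shiftn_greedyDigits, ← le_iff_toLex_quasiGreedyDigits_le hβ one_mem_Ioc hmem] at hle
  exact hle.not_gt hmem.2

lemma mem_survivor_iff (hβ : 1 < β) (ht : t ∈ Ioc (0 : ℝ) 1) :
    x ∈ survivor β t ↔ x ∈ Ico (0 : ℝ) 1 ∧
      ∀ n, toLex (quasiGreedyDigits β t) ≤ toLex (shiftn n (greedyDigits β x)) :=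
  and_congr_right fun hx => forall_congr' fun n => by
    rw [shiftn_greedyDigits,
      ← le_iff_toLex_quasiGreedyDigits_le hβ ht (iterate_Tbeta_mem_Ico β hx n)]

lemma iterate_Tbeta_succ_le (hβ : 0 < β) (hx : x ∈ Ico (0 : ℝ) 1) (ht : t ∈ Ioc (0 : ℝ) 1) {k : ℕ}
    (hk : ∀ i < k, quasiGreedyDigits β t i = greedyDigits β x i)
    (hlt : quasiGreedyDigits β t k < greedyDigits β x k) :
    (Tbeta β)^[k + 1] x ≤ β ^ (k + 1) * (x - t) := by
  have hgap := (isExpansion_quasiGreedyDigits β t).one_add_sub_le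
    (isExpansion_greedyDigits hβ hx) hk hlt
  simp only [Function.iterate_zero, id] at hgap
  linarith [(iterate_quasiGreedyMap_mem_Ioc hβ ht (k + 1)).2]

lemma mem_survivor_add_div_pow (hβ : 1 < β) (hs : s ∈ Ioc (0 : ℝ) 1) (ht : 0 ≤ t) {M : ℕ}
    (hx : x ∈ survivor β t)
    (h : ∀ n, ∃ k ≤ M, (∀ i < k, quasiGreedyDigits β s i = shiftn n (greedyDigits β x) i) ∧
      quasiGreedyDigits β s k < shiftn n (greedyDigits β x) k) :
    x ∈ survivor β (s + t / β ^ (M + 1)) := by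
  have h0 : 0 < β := by linarith
  refine ⟨hx.1, fun n => ?_⟩
  obtain ⟨k, hkM, hk, hlt⟩ := h n
  rw [shiftn_greedyDigits] at hk hlt
  have hgap : t ≤ β ^ (k + 1) * ((Tbeta β)^[n] x - s) := by
    refine (hx.2 (k + 1 + n)).trans ?_
    rw [Function.iterate_add_apply]
    exact iterate_Tbeta_succ_le h0 (iterate_Tbeta_mem_Ico β hx.1 n) hs hk hlt
  have hnonneg : 0 ≤ (Tbeta β)^[n] x - s :=
    nonneg_of_mul_nonneg_right (ht.trans hgap) (by positivity)
  rw [← le_sub_iff_add_le', div_le_iff₀' (by positivity)]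
  exact hgap.trans (by gcongr; exact hβ.le)

lemma exists_quasiGreedyDigits_agree (hβ : 0 < β) (ht : t ∈ Ioc (0 : ℝ) 1) (L : ℕ) :
    ∃ δ > 0, ∀ s, t - δ < s → s ≤ t →
      ∀ i < L, quasiGreedyDigits β s i = quasiGreedyDigits β t i := by
  induction L with
  | zero => exact ⟨1, one_pos, fun s _ _ i hi => absurd hi (Nat.not_lt_zero i)⟩
  | succ L ih =>
    obtain ⟨δ, hδ, hagree⟩ := ih
    have hmem := iterate_quasiGreedyMap_mem_Ioc hβ ht (L + 1)
    refine ⟨min δ ((quasiGreedyMap β)^[L + 1] t / β ^ (L + 1)),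
      lt_min hδ (div_pos hmem.1 (by positivity)), fun s hs hst => ?_⟩
    rw [sub_lt_comm, lt_min_iff, lt_div_iff₀ (by positivity), pow_succ'] at hs
    have hprefix := hagree s (by linarith) hst
    refine Nat.forall_lt_succ_right.2 ⟨hprefix, ?_⟩
    have hdiff := (isExpansion_quasiGreedyDigits β s).sub_eq_of_agree
      (isExpansion_quasiGreedyDigits β t) hprefix
    have hstep := isExpansion_quasiGreedyDigits β t L
    have hnonneg : 0 ≤ β * (β ^ L * (t - s)) :=
      mul_nonneg hβ.le (mul_nonneg (by positivity) (by linarith))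
    simp only [Function.iterate_zero, id] at hdiff hstep
    refine Nat.sub_eq_of_eq_add ((Nat.ceil_eq_iff (by omega)).2 ?_)
    push_cast
    constructor
    · linear_combination hs.2 + hstep + β * hdiff
    · linear_combination hnonneg + hmem.2 - hstep - β * hdiff

lemma quasiGreedyDigits_le_ceil (hβ : 0 < β) (ht : t ∈ Ioc (0 : ℝ) 1) (n : ℕ) :
    quasiGreedyDigits β t n ≤ ⌈β⌉₊ :=
  (Nat.sub_le _ _).trans (Nat.ceil_le_ceil
    (mul_le_of_le_one_right hβ.le (iterate_quasiGreedyMap_mem_Ioc hβ ht n).2))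

lemma pow_mul_sub_le_of_quasiGreedyDigits_agree {β' : ℝ} (hβ : 0 < β) (hββ' : β ≤ β') {n : ℕ}
    (h : ∀ i < n + 1, quasiGreedyDigits β 1 i = quasiGreedyDigits β' 1 i) :
    β ^ n * (β' - β) ≤ (quasiGreedyMap β')^[n + 1] 1 - (quasiGreedyMap β)^[n + 1] 1 := by
  have hstep := isExpansion_quasiGreedyDigits β 1
  have hstep' := isExpansion_quasiGreedyDigits β' 1
  simp only [IsExpansion] at hstep hstep'
  induction n with
  | zero =>
    rw [hstep, hstep', h 0 (by omega)]
    simp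
  | succ n ih =>
    have hmul := mul_le_mul_of_nonneg_left (ih fun i hi => h i (by omega)) hβ.le
    have hnonneg := mul_nonneg (sub_nonneg.2 hββ')
      (iterate_quasiGreedyMap_mem_Ioc (hβ.trans_le hββ') one_mem_Ioc (n + 1)).1.le
    rw [hstep, hstep', h (n + 1) (by omega)]
    linear_combination hmul + hnonneg

lemma dist_le_inv_pow_of_quasiGreedyDigits_agree {β' c : ℝ} (hc : 0 < c) (hβ : c ≤ β)
    (hβ' : c ≤ β') {n : ℕ}
    (h : ∀ i < n + 1, quasiGreedyDigits β 1 i = quasiGreedyDigits β' 1 i) :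
    dist β β' ≤ (c ^ n)⁻¹ := by
  wlog hle : β ≤ β' generalizing β β'
  · rw [dist_comm]
    exact this hβ' hβ (fun i hi => (h i hi).symm) (le_of_not_ge hle)
  have hβ0 := hc.trans_le hβ
  have hmem := iterate_quasiGreedyMap_mem_Ioc hβ0 one_mem_Ioc (n + 1)
  have hmem' := iterate_quasiGreedyMap_mem_Ioc (hc.trans_le hβ') one_mem_Ioc (n + 1)
  rw [dist_comm, Real.dist_eq, abs_of_nonneg (sub_nonneg.2 hle), ← one_div,
    le_div_iff₀' (by positivity)]
  calc c ^ n * (β' - β) ≤ β ^ n * (β' - β) := by gcongr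
    _ ≤ (quasiGreedyMap β')^[n + 1] 1 - (quasiGreedyMap β)^[n + 1] 1 :=
      pow_mul_sub_le_of_quasiGreedyDigits_agree hβ0 hle h
    _ ≤ 1 := by linarith [hmem.1, hmem'.2]

end Digits

section Values

variable {β t : ℝ} {z : ℕ → ℕ} {M n : ℕ}

lemma hasSum_const_div_pow_succ (hβ : 1 < β) (a : ℝ) :
    HasSum (fun i : ℕ => a / β ^ (i + 1)) (a / (β - 1)) := by
  have h0 : β ≠ 0 := by positivity
  have hgeom := (hasSum_geometric_of_lt_one (by positivity) (inv_lt_one_of_one_lt₀ hβ)).mul_left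
    (a / β)
  have hsum : a / β * (1 - β⁻¹)⁻¹ = a / (β - 1) := by
    rw [div_eq_mul_inv, mul_assoc, ← mul_inv, mul_one_sub, mul_inv_cancel₀ h0, div_eq_mul_inv]
  refine (hsum ▸ hgeom).congr_fun fun i => ?_
  rw [inv_pow, pow_succ', div_mul_eq_div_div, div_eq_mul_inv]

lemma digit_div_pow_le (hβ : 0 < β) (hz : ∀ i, z i ≤ M) (i : ℕ) :
    (z i : ℝ) / β ^ (i + 1) ≤ M / β ^ (i + 1) := by
  gcongr
  exact hz i

lemma summable_digit_div_pow (hβ : 1 < β) (hz : ∀ i, z i ≤ M) :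
    Summable fun i : ℕ => (z i : ℝ) / β ^ (i + 1) :=
  (hasSum_const_div_pow_succ hβ M).summable.of_nonneg_of_le
    (fun i => by have : 0 < β := (by linarith); positivity) (digit_div_pow_le (by linarith) hz)

lemma valSeq_nonneg (hβ : 0 ≤ β) (z : ℕ → ℕ) : 0 ≤ valSeq β z :=
  tsum_nonneg fun i => by positivity

lemma valSeq_le (hβ : 1 < β) (hz : ∀ i, z i ≤ M) : valSeq β z ≤ M / (β - 1) :=
  hasSum_le (digit_div_pow_le (by linarith) hz) (summable_digit_div_pow hβ hz).hasSum
    (hasSum_const_div_pow_succ hβ M)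

lemma isExpansion_valSeq (hβ : 1 < β) (hz : ∀ i, z i ≤ M) :
    IsExpansion β z (fun n => valSeq β (shiftn n z)) := by
  intro n
  have h0 : β ≠ 0 := by positivity
  have hsplit := (summable_digit_div_pow hβ fun i => hz (i + n)).tsum_eq_zero_add
  have htail : valSeq β (shiftn (n + 1) z) =
      β * ∑' i : ℕ, (z (i + 1 + n) : ℝ) / β ^ (i + 1 + 1) := by
    rw [← tsum_mul_left, valSeq]
    refine tsum_congr fun i => ?_
    rw [shiftn, Nat.add_right_comm i 1 n, pow_succ' β (i + 1)]
    field_simp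
    rfl
  simp only [htail]
  simp only [valSeq, shiftn, hsplit, zero_add, pow_one]
  field_simp
  ring

lemma IsExpansion.eq_valSeq (hβ : 1 < β) (hz : ∀ i, z i ≤ M) {y : ℕ → ℝ} (h : IsExpansion β z y)
    {C : ℝ} (hC : ∀ n, |y n| ≤ C) : y 0 = valSeq β z := by
  refine (isExpansion_valSeq hβ hz).eq_of_bounded hβ h (C := C + M / (β - 1)) fun n => ?_
  refine (abs_sub _ _).trans (add_le_add (hC n) ?_)
  rw [abs_of_nonneg (valSeq_nonneg (by linarith) _)]
  exact valSeq_le hβ fun i => hz _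

lemma valSeq_quasiGreedyDigits (hβ : 1 < β) (ht : t ∈ Ioc (0 : ℝ) 1) :
    valSeq β (quasiGreedyDigits β t) = t := by
  have h0 : 0 < β := by linarith
  refine ((isExpansion_quasiGreedyDigits β t).eq_valSeq hβ (quasiGreedyDigits_le_ceil h0 ht)
    (C := 1) fun n => ?_).symm
  have hmem := iterate_quasiGreedyMap_mem_Ioc h0 ht n
  exact abs_le.2 ⟨by linarith [hmem.1], hmem.2⟩

lemma exists_quasiGreedyDigits_ne_zero (hβ : 1 < β) (ht : t ∈ Ioc (0 : ℝ) 1) :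
    ∃ i, quasiGreedyDigits β t i ≠ 0 := by
  by_contra! h
  have hval := valSeq_quasiGreedyDigits hβ ht
  simp only [valSeq, h, Nat.cast_zero, zero_div, tsum_zero] at hval
  exact ht.1.ne hval

lemma apply_le_of_toLex_shiftn_le {b : ℕ → ℕ} (h : ∀ n, toLex (shiftn n z) ≤ toLex b) (n : ℕ) :
    z n ≤ b 0 := by
  simpa [shiftn] using toLex_le_iff_forall.1 (h n) 0 (by simp)

lemma pow_mul_valSeq_sub_one_lt (hβ : 1 < β)
    (h : ∀ n, toLex (shiftn n z) ≤ toLex (quasiGreedyDigits β 1)) {k : ℕ}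
    (hk : ∀ i < k, shiftn n z i = quasiGreedyDigits β 1 i)
    (hlt : shiftn n z k < quasiGreedyDigits β 1 k) :
    β ^ (k + 1) * (valSeq β (shiftn n z) - 1) < valSeq β (shiftn (k + 1 + n) z) - 1 := by
  have hgap := ((isExpansion_valSeq hβ (apply_le_of_toLex_shiftn_le h)).shift n).one_add_sub_le
    (isExpansion_quasiGreedyDigits β 1) hk hlt
  simp only [Function.iterate_zero, id, zero_add] at hgap
  linarith [(iterate_quasiGreedyMap_mem_Ioc (by linarith : 0 < β) one_mem_Ioc (k + 1)).1]

lemma valSeq_shiftn_le_one (hβ : 1 < β)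
    (h : ∀ n, toLex (shiftn n z) ≤ toLex (quasiGreedyDigits β 1)) (n : ℕ) :
    valSeq β (shiftn n z) ≤ 1 := by
  refine sub_nonpos.1 (nonpos_of_forall_exists_mul_le hβ
    (f := fun n => valSeq β (shiftn n z) - 1)
    ⟨_, forall_mem_range.2 fun n => sub_le_sub_right
      (valSeq_le hβ fun i => apply_le_of_toLex_shiftn_le h _) 1⟩ (fun n hpos => ?_) n)
  rcases (h n).eq_or_lt with heq | ⟨k, hk, hlt⟩
  · rw [toLex.injective heq, valSeq_quasiGreedyDigits hβ one_mem_Ioc, sub_self] at hpos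
    exact absurd hpos (lt_irrefl 0)
  · refine ⟨k + 1 + n, le_trans ?_ (pow_mul_valSeq_sub_one_lt hβ h hk hlt).le⟩
    gcongr
    exact le_self_pow₀ hβ.le (by omega)

lemma valSeq_shiftn_lt_one (hβ : 1 < β)
    (h : ∀ n, toLex (shiftn n z) < toLex (quasiGreedyDigits β 1)) (n : ℕ) :
    valSeq β (shiftn n z) < 1 := by
  have hle := fun n => (h n).le
  obtain ⟨k, hk, hlt⟩ := h n
  have hneg := (pow_mul_valSeq_sub_one_lt hβ hle hk hlt).trans_le
    (sub_nonpos.2 (valSeq_shiftn_le_one hβ hle _))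
  exact sub_neg.1 (neg_of_mul_neg_right hneg (by positivity))

lemma valSeq_shiftn_mem_Ico (hβ : 1 < β)
    (h : ∀ n, toLex (shiftn n z) < toLex (quasiGreedyDigits β 1)) (n : ℕ) :
    valSeq β (shiftn n z) ∈ Ico (0 : ℝ) 1 :=
  ⟨valSeq_nonneg (by linarith) _, valSeq_shiftn_lt_one hβ h n⟩

lemma greedyDigits_valSeq (hβ : 1 < β)
    (h : ∀ n, toLex (shiftn n z) < toLex (quasiGreedyDigits β 1)) :
    greedyDigits β (valSeq β z) = z := by
  have hmem := valSeq_shiftn_mem_Ico hβ h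
  have hmul (n : ℕ) : β * valSeq β (shiftn n z) = z n + valSeq β (shiftn (n + 1) z) := by
    linarith [isExpansion_valSeq hβ (apply_le_of_toLex_shiftn_le fun n => (h n).le) n]
  have horbit (n : ℕ) : (Tbeta β)^[n] (valSeq β z) = valSeq β (shiftn n z) := by
    induction n with
    | zero => rfl
    | succ n ih =>
      rw [Function.iterate_succ_apply', ih, Tbeta, hmul, Int.fract_natCast_add,
        Int.fract_eq_self.2 (hmem (n + 1))]
  funext n
  rw [greedyDigits, horbit, hmul, add_comm, Nat.floor_add_natCast (hmem (n + 1)).1,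
    Nat.floor_eq_zero.2 (hmem (n + 1)).2, zero_add]

lemma strictAntiOn_valSeq (hz : ∀ i, z i ≤ M) (hn : z n ≠ 0) :
    StrictAntiOn (fun β => valSeq β z) (Ioi 1) := by
  intro β hβ β' hβ' hlt
  have h0 : 0 < β := zero_lt_one.trans hβ
  have : 0 < (z n : ℝ) := Nat.cast_pos.2 (Nat.pos_of_ne_zero hn)
  refine Summable.tsum_lt_tsum (i := n) (fun j => ?_) ?_ (summable_digit_div_pow hβ' hz)
    (summable_digit_div_pow hβ hz)
  · dsimp only
    gcongr
  · gcongr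

lemma strictMonoOn_toLex_quasiGreedyDigits_one :
    StrictMonoOn (fun β => toLex (quasiGreedyDigits β 1)) (Ioi 1) := by
  intro β hβ β' hβ' hlt
  refine lt_of_not_ge fun hle => ?_
  have hle_one := valSeq_shiftn_le_one hβ
    (fun n => (toLex_shiftn_quasiGreedyDigits_le hβ' one_mem_Ioc n).trans hle) 0
  obtain ⟨i, hi⟩ := exists_quasiGreedyDigits_ne_zero hβ' one_mem_Ioc
  have hvalue := strictAntiOn_valSeq
    (quasiGreedyDigits_le_ceil (zero_lt_one.trans hβ') one_mem_Ioc) hi hβ hβ' hlt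
  simp only [valSeq_quasiGreedyDigits hβ' one_mem_Ioc] at hvalue
  exact hvalue.not_ge hle_one

lemma strictConvexOn_one_div_pow_succ (n : ℕ) :
    StrictConvexOn ℝ (Ioi (0 : ℝ)) fun x => 1 / x ^ (n + 1) := by
  refine (strictConvexOn_zpow (m := -((n + 1 : ℕ) : ℤ)) (by omega) (by omega)).congr fun x _ => ?_
  dsimp only
  rw [zpow_neg, zpow_natCast, one_div]

lemma strictConvexOn_valSeq (hz : ∀ i, z i ≤ M) (hn : z n ≠ 0) :
    StrictConvexOn ℝ (Ioi 1) (fun β => valSeq β z) := by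
  refine ⟨convex_Ioi 1, fun x hx y hy hxy a b ha hb hab => ?_⟩
  have hmid : a • x + b • y ∈ Ioi (1 : ℝ) := convex_Ioi (1 : ℝ) hx hy ha.le hb.le hab
  have hlt (j : ℕ) :
      1 / (a • x + b • y) ^ (j + 1) < a * (1 / x ^ (j + 1)) + b * (1 / y ^ (j + 1)) :=
    (strictConvexOn_one_div_pow_succ j).2 (Ioi_subset_Ioi zero_le_one hx)
      (Ioi_subset_Ioi zero_le_one hy) hxy ha hb hab
  have hsumx := (summable_digit_div_pow hx hz).mul_left a
  have hsumy := (summable_digit_div_pow hy hz).mul_left b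
  have hcomb : a • valSeq x z + b • valSeq y z =
      ∑' j : ℕ, (z j : ℝ) * (a * (1 / x ^ (j + 1)) + b * (1 / y ^ (j + 1))) := by
    rw [smul_eq_mul, smul_eq_mul, valSeq, valSeq, ← tsum_mul_left, ← tsum_mul_left,
      ← hsumx.tsum_add hsumy]
    exact tsum_congr fun j => by ring
  dsimp only
  rw [hcomb]
  refine Summable.tsum_lt_tsum (i := n) (fun j => ?_) ?_ (summable_digit_div_pow hmid hz)
    ((hsumx.add hsumy).congr fun j => by ring)
  · rw [← mul_one_div]
    exact mul_le_mul_of_nonneg_left (hlt j).le (Nat.cast_nonneg _)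
  · rw [← mul_one_div]
    exact mul_lt_mul_of_pos_left (hlt n) (Nat.cast_pos.2 (Nat.pos_of_ne_zero hn))

lemma analyticOnNhd_valSeq (hz : ∀ i, z i ≤ M) :
    AnalyticOnNhd ℝ (fun β => valSeq β z) (Ioi 1) := by
  let p : FormalMultilinearSeries ℝ ℝ ℝ := .ofScalars ℝ fun n => (z n : ℝ)
  have hradius : 1 ≤ p.radius := by
    refine p.le_radius_of_bound (r := 1) M fun n => ?_
    simpa [p, FormalMultilinearSeries.ofScalars_norm] using hz n
  have hvalue : (fun β => β⁻¹ * p.sum β⁻¹) = fun β => valSeq β z := by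
    funext β
    rw [FormalMultilinearSeries.sum, ← tsum_mul_left, valSeq]
    refine tsum_congr fun n => ?_
    rw [FormalMultilinearSeries.ofScalars_apply_eq, smul_eq_mul, inv_pow, div_eq_mul_inv, pow_succ,
      mul_inv]
    ring
  intro β hβ
  have h1 : 1 < β := hβ
  have hinv : AnalyticAt ℝ (fun x : ℝ => x⁻¹) β := analyticAt_inv (by positivity)
  have hmem : β⁻¹ ∈ Metric.eball (0 : ℝ) p.radius := by
    refine Metric.eball_subset_eball (ε₁ := ENNReal.ofReal 1) (by simpa using hradius) ?_
    rw [Metric.eball_ofReal, mem_ball_zero_iff, norm_inv, Real.norm_of_nonneg (by positivity)]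
    exact inv_lt_one_of_one_lt₀ h1
  rw [← hvalue]
  exact hinv.mul (((p.hasFPowerSeriesOnBall (one_pos.trans_le hradius)).analyticOnNhd _
    hmem).comp_of_eq hinv rfl)

end Values

section HausdorffDimension

variable {X : Type*} [MetricSpace X] {A : Set X}

lemma dimH_le_of_covers {s : NNReal} {C : ℝ} {r : ℕ → ℝ} (hr0 : ∀ k, 0 ≤ r k)
    (hr : Tendsto r atTop (𝓝 0)) {ι : ℕ → Type*} [∀ k, Fintype (ι k)] (U : ∀ k, ι k → Set X)
    (hcover : ∀ k, A ⊆ ⋃ i, U k i) (hdist : ∀ k i, ∀ x ∈ U k i, ∀ y ∈ U k i, dist x y ≤ r k)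
    (hcard : ∀ k, (Fintype.card (ι k) : ℝ) * r k ^ (s : ℝ) ≤ C) : dimH A ≤ s := by
  borelize X
  have hdiam (k : ℕ) (i : ι k) : Metric.ediam (U k i) ≤ ENNReal.ofReal (r k) :=
    Metric.ediam_le fun x hx y hy => by
      rw [edist_dist]
      exact ENNReal.ofReal_le_ofReal (hdist k i x hx y hy)
  have hsum (k : ℕ) : ∑ i, Metric.ediam (U k i) ^ (s : ℝ) ≤ ENNReal.ofReal C := calc
    ∑ i, Metric.ediam (U k i) ^ (s : ℝ) ≤ ∑ _ : ι k, ENNReal.ofReal (r k) ^ (s : ℝ) :=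
      Finset.sum_le_sum fun i _ => ENNReal.rpow_le_rpow (hdiam k i) s.coe_nonneg
    _ = ENNReal.ofReal (Fintype.card (ι k) * r k ^ (s : ℝ)) := by
      rw [Finset.sum_const, Finset.card_univ, nsmul_eq_mul, ENNReal.ofReal_mul (by positivity),
        ENNReal.ofReal_natCast, ENNReal.ofReal_rpow_of_nonneg (hr0 k) s.coe_nonneg]
    _ ≤ ENNReal.ofReal C := ENNReal.ofReal_le_ofReal (hcard k)
  have hmeasure := Measure.hausdorffMeasure_le_liminf_sum s A (l := atTop)
    (fun k => ENNReal.ofReal (r k)) (by simpa using ENNReal.tendsto_ofReal hr) U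
    (.of_forall hdiam) (.of_forall hcover)
  exact dimH_le_of_hausdorffMeasure_ne_top (ne_top_of_le_ne_top ENNReal.ofReal_ne_top
    (hmeasure.trans ((liminf_le_liminf (.of_forall hsum)).trans_eq (liminf_const _))))

lemma dimH_le_of_code {ι : Type*} {W : Set ι} (hW : W.Finite) (code : X → ℕ → ι)
    (hcode : ∀ x ∈ A, ∀ j, code x j ∈ W) {ρ : ℝ} {s : NNReal} (hρ : 0 < ρ) (hρ1 : ρ < 1)
    (hdist : ∀ x ∈ A, ∀ y ∈ A, ∀ k, (∀ j ≤ k, code x j = code y j) → dist x y ≤ ρ ^ k)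
    (hcard : (W.ncard : ℝ) * ρ ^ (s : ℝ) ≤ 1) : dimH A ≤ s := by
  have : Fintype W := hW.fintype
  refine dimH_le_of_covers (fun k => (pow_pos hρ k).le)
    (tendsto_pow_atTop_nhds_zero_of_lt_one hρ.le hρ1)
    (ι := fun k => Fin (k + 1) → W) (fun k w => {x ∈ A | ∀ j : Fin (k + 1), code x j = w j})
    (fun k x hx => mem_iUnion.2 ⟨fun j => ⟨code x j, hcode x hx j⟩, hx, fun _ => rfl⟩)
    (fun k w x hx y hy => hdist x hx.1 y hy.1 k fun j hj =>
      (hx.2 ⟨j, by omega⟩).trans (hy.2 ⟨j, by omega⟩).symm) (C := W.ncard) fun k => ?_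
  rw [Fintype.card_fun, Fintype.card_fin, ← Nat.card_eq_fintype_card, Nat.card_coe_set_eq,
    Nat.cast_pow, ← Real.rpow_pow_comm hρ.le, pow_succ', mul_assoc, ← mul_pow]
  exact mul_le_of_le_one_right (by positivity) (pow_le_one₀ (by positivity) hcard)

lemma holderOnWith_ofDigits_invFun_of_separated (x : (ℕ → Fin 2) → X)
    (hinj : Function.Injective x) {δ l : ℝ} (hδ : 0 < δ) (hl : 0 < l) {r : NNReal}
    (hr : l ^ (r : ℝ) = 2) (h : ∀ c c' n, c n ≠ c' n → δ ≤ l ^ n * dist (x c) (x c')) :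
    HolderOnWith (δ⁻¹ ^ (r : ℝ)).toNNReal r (Real.ofDigits ∘ Function.invFun x) (range x) := by
  rintro _ ⟨c, rfl⟩ _ ⟨c', rfl⟩
  simp only [Function.comp_apply, Function.leftInverse_invFun hinj _]
  rw [edist_dist, edist_dist, ENNReal.ofReal_rpow_of_nonneg dist_nonneg r.coe_nonneg,
    ← ENNReal.ofReal, ← ENNReal.ofReal_mul (by positivity)]
  refine ENNReal.ofReal_le_ofReal ?_
  rcases eq_or_ne c c' with rfl | hne
  · rw [dist_self, dist_self]
    positivity
  set n := PiNat.firstDiff c c'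
  have hsep : δ ^ (r : ℝ) ≤ (l ^ n * dist (x c) (x c')) ^ (r : ℝ) := by
    gcongr
    exact h c c' n (PiNat.apply_firstDiff_ne hne)
  rw [Real.mul_rpow (by positivity) dist_nonneg, ← Real.rpow_pow_comm (by positivity), hr] at hsep
  calc dist (Real.ofDigits c) (Real.ofDigits c') ≤ (((2 : ℕ) : ℝ) ^ n)⁻¹ :=
        Real.abs_ofDigits_sub_ofDigits_le fun i hi => PiNat.apply_eq_of_lt_firstDiff hi
    _ ≤ δ⁻¹ ^ (r : ℝ) * dist (x c) (x c') ^ (r : ℝ) := by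
        rw [Real.inv_rpow hδ.le, inv_mul_eq_div, le_div_iff₀ (by positivity),
          inv_mul_le_iff₀ (by positivity)]
        exact hsep

lemma dimH_range_ne_zero_of_separated (x : (ℕ → Fin 2) → X) {δ l : ℝ} (hδ : 0 < δ) (hl : 1 < l)
    (h : ∀ c c' n, c n ≠ c' n → δ ≤ l ^ n * dist (x c) (x c')) : dimH (range x) ≠ 0 := by
  have hinj : Function.Injective x := fun c c' hcc => funext fun n => by
    by_contra hne
    have := h c c' n hne
    rw [hcc, dist_self, mul_zero] at this
    exact this.not_gt hδ
  obtain ⟨r, hr0, hr⟩ : ∃ r : NNReal, 0 < r ∧ l ^ (r : ℝ) = 2 :=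
    ⟨⟨Real.logb l 2, (Real.logb_pos hl one_lt_two).le⟩, Real.logb_pos hl one_lt_two,
      Real.rpow_logb (by positivity) hl.ne' two_pos⟩
  intro hzero
  have hsub : Ico (0 : ℝ) 1 ⊆ (Real.ofDigits ∘ Function.invFun x) '' range x := fun y hy =>
    ⟨x (Real.digits y 2), mem_range_self _,
      (congrArg Real.ofDigits (Function.leftInverse_invFun hinj _)).trans
        (Real.ofDigits_digits one_lt_two hy)⟩
  have hdim : dimH (Ico (0 : ℝ) 1) = 1 := by
    rw [Real.dimH_of_nonempty_interior (by simp), Module.finrank_self, Nat.cast_one]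
  have hle := (dimH_mono hsub).trans
    ((holderOnWith_ofDigits_invFun_of_separated x hinj hδ (by linarith) hr h).dimH_image_le hr0)
  simp [hdim, hzero] at hle

end HausdorffDimension

section SurvivorDimension

variable {X : Type*} [MetricSpace X] {A : Set X} {a b : ℕ → ℕ} {β t x x' : ℝ}

lemma eq_of_forall_revPrefix_shiftn_eq {z z' : ℕ → ℕ} {n k : ℕ} (hn : 0 < n)
    (h : ∀ j < k, revPrefix (shiftn (j * n) z) n = revPrefix (shiftn (j * n) z') n) :
    ∀ i < k * n, z i = z' i := by
  intro i hi
  have hblock := revPrefix_eq_revPrefix_iff.1 (h (i / n) ((Nat.div_lt_iff_lt_mul hn).2 hi)) (i % n)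
    (Nat.mod_lt i hn)
  simpa only [shiftn, Nat.mod_add_div'] using hblock

lemma revPrefix_shiftn_mem_admissibleWords {z : ℕ → ℕ} (ha : ∀ n, toLex a ≤ toLex (shiftn n z))
    (hb : ∀ n, toLex (shiftn n z) ≤ toLex b) (m n : ℕ) :
    revPrefix (shiftn m z) n ∈ admissibleWords a b n := by
  refine ⟨length_revPrefix _ _, forall_isAdmissible_revPrefix_iff.2 ⟨fun k => ?_, fun k => ?_⟩ n⟩
  · exact shiftn_shiftn k m z ▸ ha _
  · exact shiftn_shiftn k m z ▸ hb _

lemma dimH_le_of_ncard_admissibleWords_le {n : ℕ} (hn : 0 < n) {c : ℝ} (hc : 1 < c) {s : NNReal}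
    (hcard : ((admissibleWords a b n).ncard : ℝ) ≤ (c ^ (s : ℝ)) ^ n) (digits : X → ℕ → ℕ)
    (hmem : ∀ x ∈ A, ∀ m, revPrefix (shiftn m (digits x)) n ∈ admissibleWords a b n)
    (hdist : ∀ x ∈ A, ∀ y ∈ A, ∀ m, (∀ i < m + 1, digits x i = digits y i) →
      dist x y ≤ (c ^ m)⁻¹) : dimH A ≤ s := by
  have h0 : 0 < c := by linarith
  refine dimH_le_of_code (finite_admissibleWords a b n)
    (fun x j => revPrefix (shiftn (j * n) (digits x)) n) (fun x hx j => hmem x hx _)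
    (ρ := (c ^ n)⁻¹) (by positivity) (inv_lt_one_of_one_lt₀ (one_lt_pow₀ hc hn.ne'))
    (fun x hx y hy k hxy => ?_) ?_
  · rw [inv_pow, ← pow_mul, mul_comm]
    refine hdist x hx y hy _ fun i hi => eq_of_forall_revPrefix_shiftn_eq (k := k + 1) hn
      (fun j hj => hxy j (by omega)) i ?_
    rw [Nat.succ_mul]
    omega
  · rw [Real.inv_rpow (by positivity), ← div_eq_mul_inv, div_le_one (by positivity),
      ← Real.rpow_pow_comm h0.le]
    exact hcard

lemma dist_le_inv_pow_of_greedyDigits_agree (hβ : 0 < β) (hx : x ∈ Ico (0 : ℝ) 1)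
    (hx' : x' ∈ Ico (0 : ℝ) 1) {n : ℕ} (h : ∀ i < n, greedyDigits β x i = greedyDigits β x' i) :
    dist x x' ≤ (β ^ n)⁻¹ := by
  have hdiff := (isExpansion_greedyDigits hβ hx).sub_eq_of_agree (isExpansion_greedyDigits hβ hx') h
  simp only [Function.iterate_zero, id] at hdiff
  have hmem := iterate_Tbeta_mem_Ico β hx n
  have hmem' := iterate_Tbeta_mem_Ico β hx' n
  rw [dist_comm, Real.dist_eq, ← one_div, le_div_iff₀' (by positivity),
    ← abs_of_pos (pow_pos hβ n), ← abs_mul, ← hdiff, abs_le]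
  constructor <;> linarith [hmem.1, hmem.2, hmem'.1, hmem'.2]

lemma ZeroGrowth.dimH_eq_zero (h : ZeroGrowth a b) (hβ : 1 < β) {A : Set ℝ}
    (hA : ∀ x ∈ A, x ∈ Ico (0 : ℝ) 1 ∧ (∀ n, toLex a ≤ toLex (shiftn n (greedyDigits β x))) ∧
      ∀ n, toLex (shiftn n (greedyDigits β x)) ≤ toLex b) : dimH A = 0 := by
  refine nonpos_iff_eq_zero.1 (ENNReal.le_of_forall_pos_le_add fun s hs _ => ?_)
  rw [zero_add]
  obtain ⟨n, hn, hcard⟩ := h (β ^ (s : ℝ)) (Real.one_lt_rpow hβ hs)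
  exact dimH_le_of_ncard_admissibleWords_le hn hβ hcard (greedyDigits β)
    (fun x hx m => revPrefix_shiftn_mem_admissibleWords (hA x hx).2.1 (hA x hx).2.2 m n)
    fun x hx y hy m hxy => dist_le_inv_pow_of_greedyDigits_agree (by linarith) (hA x hx).1
      (hA y hy).1 fun i hi => hxy i (by omega)

lemma le_pow_mul_dist_of_greedyDigits_lt (hβ : 0 < β) (hx : x ∈ Ico (0 : ℝ) 1)
    (hx' : x' ∈ survivor β t) {m : ℕ}
    (h : ∀ i < m, greedyDigits β x i = greedyDigits β x' i)
    (hlt : greedyDigits β x m < greedyDigits β x' m) : t ≤ β ^ (m + 1) * dist x x' := by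
  have hgap := (isExpansion_greedyDigits hβ hx).one_add_sub_le
    (isExpansion_greedyDigits hβ hx'.1) h hlt
  simp only [Function.iterate_zero, id] at hgap
  calc t ≤ β ^ (m + 1) * (x' - x) := by
        linarith [(iterate_Tbeta_mem_Ico β hx (m + 1)).2, hx'.2 (m + 1)]
    _ ≤ β ^ (m + 1) * dist x x' := by
        gcongr
        rw [dist_comm]
        exact le_abs_self _

lemma le_pow_mul_dist_of_greedyDigits_ne (hβ : 1 < β) (hx : x ∈ survivor β t)
    (hx' : x' ∈ survivor β t) {N k : ℕ} (hkN : k < N)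
    (hne : greedyDigits β x k ≠ greedyDigits β x' k) : t ≤ β ^ N * dist x x' := by
  have h0 : 0 < β := by linarith
  set m := PiNat.firstDiff (greedyDigits β x) (greedyDigits β x')
  have hagree (i : ℕ) (hi : i < m) : greedyDigits β x i = greedyDigits β x' i :=
    PiNat.apply_eq_of_lt_firstDiff hi
  have hmN : m < N := (not_lt.1 fun hkm => hne (hagree k hkm)).trans_lt hkN
  have hfirst : t ≤ β ^ (m + 1) * dist x x' := by
    rcases (PiNat.apply_firstDiff_ne fun heq => hne (congrFun heq k)).lt_or_gt with hlt | hlt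
    · exact le_pow_mul_dist_of_greedyDigits_lt h0 hx.1 hx' hagree hlt
    · rw [dist_comm]
      exact le_pow_mul_dist_of_greedyDigits_lt h0 hx'.1 hx (fun i hi => (hagree i hi).symm) hlt
  exact hfirst.trans (by gcongr; exacts [hβ.le, hmN])

lemma dimH_survivor_ne_zero (hβ : 1 < β) (ht : 0 < t) {P : ℕ} (hP : 0 < P)
    (x : (ℕ → Fin 2) → ℝ) (hx : ∀ c, x c ∈ survivor β t)
    (hdet : ∀ c c' n, (∀ i < (n + 1) * P, greedyDigits β (x c) i = greedyDigits β (x c') i) →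
      c n = c' n) : dimH (survivor β t) ≠ 0 := by
  have hpos : 0 < β ^ P := pow_pos (by linarith) P
  refine ((pos_iff_ne_zero.2 (dimH_range_ne_zero_of_separated x (div_pos ht hpos)
    (one_lt_pow₀ hβ hP.ne') fun c c' n hne => ?_)).trans_le
    (dimH_mono (range_subset_iff.2 hx))).ne'
  obtain ⟨i, hi, hdigit⟩ : ∃ i < (n + 1) * P,
      greedyDigits β (x c) i ≠ greedyDigits β (x c') i := by
    by_contra! hall
    exact hne (hdet c c' n hall)
  have hsep := le_pow_mul_dist_of_greedyDigits_ne hβ (hx c) (hx c') hi hdigit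
  rw [div_le_iff₀ hpos]
  calc t ≤ β ^ ((n + 1) * P) * dist (x c) (x c') := hsep
    _ = (β ^ P) ^ n * dist (x c) (x c') * β ^ P := by ring

lemma HasHorseshoe.exists_dimH_ne_zero (hβ : 1 < β) (ht : t ∈ Ioc (0 : ℝ) 1)
    (h : HasHorseshoe (quasiGreedyDigits β t) (quasiGreedyDigits β 1)) :
    ∃ t' > t, dimH (survivor β t') ≠ 0 := by
  obtain ⟨P, M, z, hP, hlow, hup, hdet⟩ := h.exists_family
  have hgreedy (c : ℕ → Fin 2) : greedyDigits β (valSeq β (z c)) = z c :=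
    greedyDigits_valSeq hβ (hup c)
  have ht0 := ht.1
  have hstep : 0 < t / β ^ (M + 1) := by positivity
  refine ⟨t + t / β ^ (M + 1), by linarith, dimH_survivor_ne_zero hβ (by linarith) hP
    (fun c => valSeq β (z c)) (fun c => ?_)
    fun c c' n hagree => hdet c c' n (by simpa only [hgreedy] using hagree)⟩
  refine mem_survivor_add_div_pow hβ ht ht0.le ((mem_survivor_iff hβ ht).2
    ⟨valSeq_shiftn_mem_Ico hβ (hup c) 0, fun n => ?_⟩) (by simpa only [hgreedy] using hlow c)
  obtain ⟨k, -, hk, hlt⟩ := hlow c n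
  rw [hgreedy]
  have hlex : toLex (quasiGreedyDigits β t) < toLex (shiftn n (z c)) := ⟨k, hk, hlt⟩
  exact hlex.le

end SurvivorDimension

section SparseSequences

variable {K j n : ℕ} {b : ℕ → ℕ} {c c' : ℕ → Fin 2} {β x : ℝ}

/-- The 0-1 sequence with ones at all even multiples of `K` and at those odd multiples
`K * (2 * n + 1)` for which `c n = 1`. -/
def sparseSeq (K : ℕ) (c : ℕ → Fin 2) (i : ℕ) : ℕ :=
  if K ∣ i ∧ (Even (i / K) ∨ c (i / K / 2) = 1) then 1 else 0

lemma dvd_of_sparseSeq_ne_zero {i : ℕ} (h : sparseSeq K c i ≠ 0) : K ∣ i :=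
  (ite_ne_right_iff.1 h).1.1

lemma sparseSeq_le_one (K : ℕ) (c : ℕ → Fin 2) (i : ℕ) : sparseSeq K c i ≤ 1 := by
  unfold sparseSeq
  split_ifs <;> omega

lemma exists_shiftn_sparseSeq_ne_zero (hK : 0 < K) (c : ℕ → Fin 2) (n : ℕ) :
    ∃ i ≤ 2 * K, shiftn n (sparseSeq K c) i ≠ 0 := by
  have hlt := Nat.lt_mul_div_succ n (by omega : 0 < 2 * K)
  have hle := Nat.mul_div_le n (2 * K)
  refine ⟨2 * K * (n / (2 * K) + 1) - n, by rw [mul_add]; omega, ?_⟩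
  have hone (m : ℕ) : sparseSeq K c (K * (2 * m)) = 1 :=
    if_pos ⟨dvd_mul_right _ _, .inl (by simp [Nat.mul_div_cancel_left _ hK])⟩
  rw [shiftn, Nat.sub_add_cancel hlt.le, mul_assoc, mul_left_comm, hone]
  exact one_ne_zero

lemma eq_of_sparseSeq_agree (hK : 0 < K)
    (h : ∀ i < (n + 1) * (2 * K), sparseSeq K c i = sparseSeq K c' i) : c n = c' n := by
  have hvalue (c : ℕ → Fin 2) : sparseSeq K c (K * (2 * n + 1)) = 1 ↔ c n = 1 := by
    rw [sparseSeq, Nat.mul_div_cancel_left _ hK, (by omega : (2 * n + 1) / 2 = n)]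
    simp
  have hiff : c n = 1 ↔ c' n = 1 := by
    rw [← hvalue, ← hvalue, h _ (by nlinarith)]
  omega

lemma toLex_shiftn_sparseSeq_lt (hb0 : b 0 ≠ 0) (hj : 0 < j) (hjK : j < K) (hbj : b j ≠ 0)
    (c : ℕ → Fin 2) (n : ℕ) : toLex (shiftn n (sparseSeq K c)) < toLex b := by
  have hgap {i : ℕ} (hi : 0 < i) (hiK : i < K) (h0 : shiftn n (sparseSeq K c) 0 ≠ 0) :
      shiftn n (sparseSeq K c) i = 0 := by
    by_contra hne
    have hn : K ∣ n := by simpa only [zero_add] using dvd_of_sparseSeq_ne_zero h0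
    exact hiK.not_ge (Nat.le_of_dvd hi ((Nat.dvd_add_left hn).1 (dvd_of_sparseSeq_ne_zero hne)))
  refine lt_of_not_ge fun hle => ?_
  obtain ⟨k, hkj, hagree, hlt⟩ := exists_le_and_lt_of_toLex_le hle (M := j) fun k hk => by
    by_contra! hjk
    exact hbj ((hk j hjk).trans (hgap hj hjK (by rwa [← hk 0 (by omega)])))
  rcases k.eq_zero_or_pos with rfl | hk
  · have := sparseSeq_le_one K c (0 + n)
    simp only [shiftn] at hlt
    omega
  · rw [hgap hk (by omega) (by rwa [← hagree 0 hk])] at hlt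
    exact Nat.not_lt_zero _ hlt

lemma iterate_Tbeta_le (hβ : 0 < β) (hx : x ∈ Ico (0 : ℝ) 1) (n : ℕ) :
    (Tbeta β)^[n] x ≤ β ^ n * x := by
  induction n with
  | zero => simp
  | succ n ih =>
    have hstep := isExpansion_greedyDigits hβ hx n
    simp only at hstep
    rw [hstep, pow_succ', mul_assoc]
    exact (sub_le_self _ (Nat.cast_nonneg _)).trans (mul_le_mul_of_nonneg_left ih hβ.le)

lemma one_le_pow_mul_of_greedyDigits_ne_zero (hβ : 0 < β) (hx : x ∈ Ico (0 : ℝ) 1)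
    (h : greedyDigits β x n ≠ 0) : 1 ≤ β ^ (n + 1) * x :=
  calc 1 ≤ β * (Tbeta β)^[n] x := Nat.floor_pos.1 (Nat.pos_of_ne_zero h)
    _ ≤ β * (β ^ n * x) := by gcongr; exact iterate_Tbeta_le hβ hx n
    _ = β ^ (n + 1) * x := by ring

end SparseSequences

section CriticalValue

variable {β t : ℝ}

lemma survivor_antitone (β : ℝ) : Antitone (survivor β) :=
  fun _ _ hst _ hx => ⟨hx.1, fun n => hst.trans (hx.2 n)⟩

lemma survivor_one (β : ℝ) : survivor β 1 = ∅ :=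
  eq_empty_of_forall_notMem fun _ hx => hx.1.2.not_ge (hx.2 0)

lemma tau_le (ht : 0 < t) (h : dimH (survivor β t) = 0) : tau β ≤ t :=
  csInf_le ⟨0, fun _ hs => hs.1.le⟩ ⟨ht, h⟩

lemma tau_le_one (β : ℝ) : tau β ≤ 1 := tau_le one_pos (by rw [survivor_one, dimH_empty])

lemma le_tau (h : dimH (survivor β t) ≠ 0) : t ≤ tau β := by
  refine le_csInf ⟨1, one_pos, by rw [survivor_one, dimH_empty]⟩ fun s hs => ?_
  by_contra! hst
  exact h (nonpos_iff_eq_zero.1 ((dimH_mono (survivor_antitone β hst.le)).trans hs.2.le))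

lemma tau_pos (hβ : 1 < β) : 0 < tau β := by
  have h0 : 0 < β := by linarith
  obtain ⟨j, hj⟩ := exists_quasiGreedyDigits_ne_zero hβ (iterate_quasiGreedyMap_mem_Ioc h0
    one_mem_Ioc 1)
  rw [← shiftn_quasiGreedyDigits] at hj
  have hfirst : quasiGreedyDigits β 1 0 ≠ 0 := by
    have hceil : 1 < ⌈β⌉₊ := Nat.lt_ceil.2 (by simpa using hβ)
    simp only [quasiGreedyDigits, Function.iterate_zero, id, mul_one]
    omega
  set K := j + 2
  have hK : 0 < K := by omega
  have hlt (c : ℕ → Fin 2) :=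
    toLex_shiftn_sparseSeq_lt hfirst j.succ_pos (by omega : j + 1 < K) hj c
  have hgreedy (c : ℕ → Fin 2) : greedyDigits β (valSeq β (sparseSeq K c)) = sparseSeq K c :=
    greedyDigits_valSeq hβ (hlt c)
  have hpos : 0 < 1 / β ^ (2 * K + 1) := by positivity
  refine hpos.trans_le (le_tau (dimH_survivor_ne_zero hβ hpos (P := 2 * K) (by omega)
    (fun c => valSeq β (sparseSeq K c)) (fun c => ?_)
    fun c c' n hagree => eq_of_sparseSeq_agree hK (by simpa only [hgreedy] using hagree)))
  have hmem : valSeq β (sparseSeq K c) ∈ Ico (0 : ℝ) 1 := valSeq_shiftn_mem_Ico hβ (hlt c) 0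
  refine ⟨hmem, fun n => ?_⟩
  obtain ⟨i, hi, hne⟩ := exists_shiftn_sparseSeq_ne_zero hK c n
  rw [← hgreedy c, shiftn_greedyDigits] at hne
  have hmemn := iterate_Tbeta_mem_Ico β hmem n
  rw [div_le_iff₀' (by positivity)]
  refine (one_le_pow_mul_of_greedyDigits_ne_zero h0 hmemn hne).trans ?_
  gcongr
  exacts [hmemn.1, hβ.le]

lemma tau_mem_Ioc (hβ : 1 < β) : tau β ∈ Ioc (0 : ℝ) 1 := ⟨tau_pos hβ, tau_le_one β⟩

lemma exists_lt_tau_agree (hβ : 1 < β) (L : ℕ) :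
    ∃ t, 0 < t ∧ t < tau β ∧ ∀ i < L, quasiGreedyDigits β t i = quasiGreedyDigits β (tau β) i := by
  obtain ⟨δ, hδ, hagree⟩ := exists_quasiGreedyDigits_agree (by linarith) (tau_mem_Ioc hβ) L
  obtain ⟨t, hmax, ht⟩ := exists_between (max_lt (tau_pos hβ) (sub_lt_self (tau β) hδ))
  rw [max_lt_iff] at hmax
  exact ⟨t, hmax.1, ht, hagree t hmax.2 ht.le⟩

end CriticalValue

section Prefixes

variable {a a' b d x y z : ℕ → ℕ} {k L M n : ℕ}

lemma agree_of_toLex_le_of_toLex_le (hxy : toLex x ≤ toLex y) (hyz : toLex y ≤ toLex z)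
    (h : ∀ i < L, x i = z i) : ∀ i < L, y i = z i := by
  intro i
  induction i using Nat.strong_induction_on with
  | _ i ih =>
    intro hi
    have hagree (j : ℕ) (hj : j < i) : y j = z j := ih j hj (hj.trans hi)
    refine le_antisymm (toLex_le_iff_forall.1 hyz i fun j hj => (hagree j hj).symm) ?_
    rw [← h i hi]
    exact toLex_le_iff_forall.1 hxy i fun j hj => (hagree j hj).trans (h j (hj.trans hi)).symm

lemma toLex_shiftn_lt_of_agree (hk : ∀ i < k, shiftn n b i = a i) (hlt : shiftn n b k < a k)
    (hb : ∀ i < n + k + 1, d i = b i) (ha : ∀ i < k + 1, a' i = a i) :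
    toLex (shiftn n d) < toLex a' := by
  have hshift (i : ℕ) (hi : i < k + 1) : shiftn n d i = shiftn n b i := hb (i + n) (by omega)
  refine ⟨k, fun i hi => ?_, ?_⟩
  · exact (hshift i (by omega)).trans ((hk i hi).trans (ha i (by omega)).symm)
  · exact (hshift k (by omega)).trans_lt (hlt.trans_eq (ha k (by omega)).symm)

lemma exists_le_and_lt_of_toLex_le_of_agree (hle : toLex a' ≤ toLex d)
    (ha : ∀ i < M + 1, a' i = a i) (hne : ¬ ∀ i < M + 1, d i = a i) :
    ∃ k ≤ M, (∀ i < k, a i = d i) ∧ a k < d k := by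
  obtain ⟨k, hkM, hagree, hlt⟩ := exists_le_and_lt_of_toLex_le hle (M := M) fun k hk => by
    by_contra! hMk
    exact hne fun i hi => (hk i (by omega)).symm.trans (ha i hi)
  exact ⟨k, hkM, fun i hi => (ha i (by omega)).symm.trans (hagree i hi),
    (ha k (by omega)).symm.trans_lt hlt⟩

lemma continuousAt_iff_eventually_agree {X : Type*} [TopologicalSpace X] {F : X → ℕ → ℕ} {p : X} :
    ContinuousAt F p ↔ ∀ L, ∀ᶠ q in 𝓝 p, ∀ i < L, F q i = F p i := by
  simp_rw [continuousAt_pi, ContinuousAt, nhds_discrete, tendsto_pure]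
  exact ⟨fun h L => (eventually_all_finite (finite_lt_nat L)).2 fun i _ => h i,
    fun h i => (h (i + 1)).mono fun q hq => hq i i.lt_succ_self⟩

-- A point of discontinuity is the least or the greatest point of a cylinder set of `F`.
lemma countable_setOf_not_continuousAt_of_monotoneOn_toLex {X : Type*} [LinearOrder X]
    [TopologicalSpace X] [OrderClosedTopology X] {F : X → ℕ → ℕ} {S : Set X} (hS : IsOpen S)
    (hF : MonotoneOn (fun p => toLex (F p)) S) : {p ∈ S | ¬ ContinuousAt F p}.Countable := by
  let cylinder (w : List ℕ) : Set X := {p ∈ S | revPrefix (F p) w.length = w}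
  have hextreme :
      (⋃ w, ({p | IsLeast (cylinder w) p} ∪ {p | IsGreatest (cylinder w) p})).Countable :=
    countable_iUnion fun w => .union
      (Set.Subsingleton.countable fun _ hp _ hq => hp.unique hq)
      (Set.Subsingleton.countable fun _ hp _ hq => hp.unique hq)
  refine hextreme.mono ?_
  rintro p ⟨hp, hdisc⟩
  by_contra hnot
  simp only [mem_iUnion, mem_union, mem_ofPred_eq, not_exists, not_or] at hnot
  refine hdisc (continuousAt_iff_eventually_agree.2 fun L => ?_)
  have hmem (q : X) : q ∈ cylinder (revPrefix (F p) L) ↔ q ∈ S ∧ ∀ i < L, F q i = F p i := by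
    simp only [cylinder, mem_ofPred_eq, length_revPrefix, revPrefix_eq_revPrefix_iff]
  have hpmem := (hmem p).2 ⟨hp, fun _ _ => rfl⟩
  obtain ⟨q, hq, hqp⟩ : ∃ q ∈ cylinder (revPrefix (F p) L), q < p := by
    by_contra! hall
    exact (hnot _).1 ⟨hpmem, hall⟩
  obtain ⟨r, hr, hpr⟩ : ∃ r ∈ cylinder (revPrefix (F p) L), p < r := by
    by_contra! hall
    exact (hnot _).2 ⟨hpmem, hall⟩
  rw [hmem] at hq hr
  filter_upwards [Ioo_mem_nhds hqp hpr, hS.mem_nhds hp] with u hu huS i hi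
  rw [← hr.2 i hi]
  exact agree_of_toLex_le_of_toLex_le (hF hq.1 huS hu.1.le) (hF huS hr.1 hu.2.le)
    (fun i hi => (hq.2 i hi).trans (hr.2 i hi).symm) i hi

end Prefixes

section CriticalDigits

variable {a b : ℕ → ℕ} {β β₁ β₂ t : ℝ} {n k : ℕ}

/-- The quasi-greedy digits of the critical value `τ(β)` in base `β`. -/
noncomputable def tauDigits (β : ℝ) : ℕ → ℕ := quasiGreedyDigits β (tau β)

lemma toLex_tauDigits_le_shiftn (hβ : 1 < β) (n : ℕ) :
    toLex (tauDigits β) ≤ toLex (shiftn n (tauDigits β)) := by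
  by_contra! hlt
  obtain ⟨k, hk, hlt⟩ := hlt
  obtain ⟨t, ht0, ht, hagree⟩ := exists_lt_tau_agree hβ (n + k + 1)
  have hdigits (x : ℝ) (hx : x ∈ survivor β t) :=
    ((mem_survivor_iff hβ ⟨ht0, ht.le.trans (tau_le_one β)⟩).1 hx).2
  have hsub : survivor β t ⊆ survivor β (tau β + t / β ^ (n + k + 1)) := fun x hx =>
    mem_survivor_add_div_pow hβ (tau_mem_Ioc hβ) ht0.le hx fun m =>
      exists_le_and_lt_of_toLex_le_of_agree (hdigits x hx m) hagree fun hall =>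
        (hdigits x hx (n + m)).not_gt <| shiftn_shiftn n m _ ▸
          toLex_shiftn_lt_of_agree hk hlt hall fun i hi => hagree i (by omega)
  have hdim : dimH (survivor β (tau β + t / β ^ (n + k + 1))) ≠ 0 := fun h =>
    ht.not_ge (tau_le ht0 (nonpos_iff_eq_zero.1 ((dimH_mono hsub).trans h.le)))
  have hstep : 0 < t / β ^ (n + k + 1) := by positivity
  linarith [le_tau hdim]

lemma zeroGrowth_tauDigits (hβ : 1 < β) : ZeroGrowth (tauDigits β) (quasiGreedyDigits β 1) := by
  refine zeroGrowth_of_not_hasHorseshoe (toLex_tauDigits_le_shiftn hβ)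
    (toLex_shiftn_quasiGreedyDigits_le hβ one_mem_Ioc) fun hhorseshoe => ?_
  obtain ⟨t, ht, hdim⟩ := hhorseshoe.exists_dimH_ne_zero hβ (tau_mem_Ioc hβ)
  exact ht.not_ge (le_tau hdim)

lemma not_zeroGrowth_of_lt_tau (hβ : 1 < β) (ht0 : 0 < t) (ht : t < tau β)
    (ha : toLex a ≤ toLex (quasiGreedyDigits β t))
    (hb : ∀ x ∈ survivor β t, ∀ n, toLex (shiftn n (greedyDigits β x)) ≤ toLex b) :
    ¬ ZeroGrowth a b := fun hzero =>
  ht.not_ge (tau_le ht0 (hzero.dimH_eq_zero hβ fun x hx => ⟨hx.1, fun n =>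
    ha.trans (((mem_survivor_iff hβ ⟨ht0, ht.le.trans (tau_le_one β)⟩).1 hx).2 n), hb x hx⟩))

lemma exists_lt_tau_of_toLex_lt (hβ : 1 < β) (h : toLex a < toLex (tauDigits β)) (L : ℕ) :
    ∃ t, 0 < t ∧ t < tau β ∧ toLex a < toLex (quasiGreedyDigits β t) ∧
      ∀ i < L, quasiGreedyDigits β t i = tauDigits β i := by
  obtain ⟨k, hk, hlt⟩ := h
  obtain ⟨t, ht0, ht, hagree⟩ := exists_lt_tau_agree hβ (k + 1 + L)
  exact ⟨t, ht0, ht, toLex_shiftn_lt_of_agree (n := 0) hk hlt (fun _ _ => rfl)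
    fun i hi => hagree i (by omega), fun i hi => hagree i (by omega)⟩

lemma monotoneOn_toLex_tauDigits : MonotoneOn (fun β => toLex (tauDigits β)) (Ioi 1) := by
  intro β₁ hβ₁ β₂ hβ₂ hle
  by_contra! hlt
  obtain ⟨t, ht0, ht, ha, -⟩ := exists_lt_tau_of_toLex_lt hβ₁ hlt 0
  refine not_zeroGrowth_of_lt_tau hβ₁ ht0 ht ha.le (fun x hx n => ?_) (zeroGrowth_tauDigits hβ₂)
  exact (toLex_shiftn_greedyDigits_lt hβ₁ hx.1 n).le.trans
    (strictMonoOn_toLex_quasiGreedyDigits_one.monotoneOn hβ₁ hβ₂ hle)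

lemma tauDigits_eq_of_agree (hβ₁ : 1 < β₁) (hlt : β₁ < β₂)
    (hb₁ : ∀ i < n + k + 1, quasiGreedyDigits β₁ 1 i = b i)
    (hb₂ : ∀ i < n + k + 1, quasiGreedyDigits β₂ 1 i = b i)
    (ha₂ : ∀ i < k + 1, tauDigits β₂ i = a i) (hk : ∀ i < k, shiftn n b i = a i)
    (hbk : shiftn n b k < a k) : tauDigits β₁ = tauDigits β₂ := by
  have hβ₂ : 1 < β₂ := hβ₁.trans hlt
  by_contra hne
  obtain ⟨t, ht0, ht, ha, hagree⟩ := exists_lt_tau_of_toLex_lt hβ₂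
    ((monotoneOn_toLex_tauDigits hβ₁ hβ₂ hlt.le).lt_of_ne (toLex.injective.ne hne)) (k + 1)
  refine not_zeroGrowth_of_lt_tau hβ₂ ht0 ht ha.le (fun x hx m => ?_) (zeroGrowth_tauDigits hβ₁)
  by_contra! hgt
  have hprefix := agree_of_toLex_le_of_toLex_le hgt.le (toLex_shiftn_greedyDigits_lt hβ₂ hx.1 m).le
    (L := n + k + 1) fun i hi => (hb₁ i hi).trans (hb₂ i hi).symm
  have hbelow := toLex_shiftn_lt_of_agree hk hbk (fun i hi => (hprefix i hi).trans (hb₂ i hi))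
    fun i hi => (hagree i hi).trans (ha₂ i hi)
  rw [shiftn_shiftn] at hbelow
  exact hbelow.not_ge
    (((mem_survivor_iff hβ₂ ⟨ht0, ht.le.trans (tau_le_one β₂)⟩).1 hx).2 (n + m))

lemma eventually_tauDigits_eq (hβ : 1 < β) (hb : ContinuousAt (fun β => quasiGreedyDigits β 1) β)
    (ha : ContinuousAt tauDigits β)
    (hn : toLex (shiftn n (quasiGreedyDigits β 1)) < toLex (tauDigits β)) :
    ∀ᶠ β' in 𝓝 β, tauDigits β' = tauDigits β := by
  rw [continuousAt_iff_eventually_agree] at ha hb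
  obtain ⟨k, hk, hlt⟩ := hn
  filter_upwards [hb (n + k + 1), ha (k + 1), Ioi_mem_nhds hβ] with β' hb' ha' hβ'
  rcases lt_trichotomy β' β with hββ' | rfl | hββ'
  · exact tauDigits_eq_of_agree hβ' hββ' hb' (fun _ _ => rfl) (fun _ _ => rfl) hk hlt
  · rfl
  · exact (tauDigits_eq_of_agree hβ hββ' (fun _ _ => rfl) hb' ha' hk hlt).symm

end CriticalDigits

section Plateaus

variable {β β' : ℝ} {B : Set ℝ}

lemma exists_mem_nhds_dimH_inter_le (hβ : 1 < β)
    (hb : ContinuousAt (fun β => quasiGreedyDigits β 1) β) (ha : ContinuousAt tauDigits β)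
    (hB : ∀ β' ∈ B, ∀ n, toLex (tauDigits β') ≤ toLex (shiftn n (quasiGreedyDigits β' 1)))
    {s : NNReal} (hs : 0 < s) : ∃ U ∈ 𝓝 β, dimH (B ∩ U) ≤ s := by
  rw [continuousAt_iff_eventually_agree] at ha hb
  obtain ⟨c, hc, hcβ⟩ := exists_between hβ
  obtain ⟨n, hn, hcard⟩ := zeroGrowth_tauDigits hβ (c ^ (s : ℝ)) (Real.one_lt_rpow hc hs)
  refine ⟨_, (hb n).and ((ha n).and (Ioi_mem_nhds hcβ)), dimH_le_of_ncard_admissibleWords_le hn hc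
    hcard (fun β => quasiGreedyDigits β 1) ?_ ?_⟩
  · rintro β' ⟨hβB, hb', ha', hcβ'⟩ m
    obtain ⟨hlength, hadm⟩ := revPrefix_shiftn_mem_admissibleWords (hB β' hβB)
      (toLex_shiftn_quasiGreedyDigits_le (hc.trans hcβ') one_mem_Ioc) m n
    exact ⟨hlength, hadm.congr (fun i hi => ha' i (hlength ▸ hi)) fun i hi => hb' i (hlength ▸ hi)⟩
  · rintro β₁ ⟨-, -, -, hcβ₁⟩ β₂ ⟨-, -, -, hcβ₂⟩ m hagree
    exact dist_le_inv_pow_of_quasiGreedyDigits_agree (by linarith) hcβ₁.le hcβ₂.le hagree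

lemma dimH_le_of_forall_exists_mem_nhds {X : Type*} [EMetricSpace X] [SecondCountableTopology X]
    {A : Set X} {r : ENNReal} (h : ∀ x ∈ A, ∃ U ∈ 𝓝 x, dimH (A ∩ U) ≤ r) : dimH A ≤ r := by
  by_contra! hlt
  obtain ⟨x, hx, hlocal⟩ := exists_mem_nhdsWithin_lt_dimH_of_lt_dimH hlt
  obtain ⟨U, hU, hle⟩ := h x hx
  exact (hlocal _ (inter_mem_nhdsWithin A hU)).not_ge hle

/-- The bases `β > 1` near which the digits of `τ(β)` do not depend on `β`. -/
def tauPlateaus : Set ℝ := {β | 1 < β ∧ ∀ᶠ β' in 𝓝 β, tauDigits β' = tauDigits β}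

lemma tauPlateaus_subset_Ioi : tauPlateaus ⊆ Ioi 1 := fun _ hβ => hβ.1

lemma isOpen_tauPlateaus : IsOpen tauPlateaus := by
  refine isOpen_iff_mem_nhds.2 fun β hβ => ?_
  filter_upwards [Ioi_mem_nhds hβ.1, hβ.2.eventually_nhds, hβ.2] with β' hβ' hlocal heq
  exact ⟨hβ', hlocal.mono fun _ h => h.trans heq.symm⟩

lemma dimH_Ioi_diff_tauPlateaus : dimH (Ioi 1 \ tauPlateaus) = 0 := by
  set D₁ : Set ℝ := {β ∈ Ioi 1 | ¬ ContinuousAt (fun β => quasiGreedyDigits β 1) β}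
  set D₂ : Set ℝ := {β ∈ Ioi 1 | ¬ ContinuousAt tauDigits β}
  set B : Set ℝ := (Ioi 1 \ tauPlateaus) \ (D₁ ∪ D₂)
  have hcont₁ (β : ℝ) (hβ : β ∈ B) : ContinuousAt (fun β => quasiGreedyDigits β 1) β :=
    not_not.1 fun h => hβ.2 (.inl ⟨hβ.1.1, h⟩)
  have hcont₂ (β : ℝ) (hβ : β ∈ B) : ContinuousAt tauDigits β :=
    not_not.1 fun h => hβ.2 (.inr ⟨hβ.1.1, h⟩)
  have hB (β : ℝ) (hβ : β ∈ B) (n : ℕ) :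
      toLex (tauDigits β) ≤ toLex (shiftn n (quasiGreedyDigits β 1)) :=
    not_lt.1 fun hlt => hβ.1.2
      ⟨hβ.1.1, eventually_tauDigits_eq hβ.1.1 (hcont₁ β hβ) (hcont₂ β hβ) hlt⟩
  have hdimB : dimH B = 0 := nonpos_iff_eq_zero.1 <|
    ENNReal.le_of_forall_pos_le_add fun s hs _ => by
      rw [zero_add]
      exact dimH_le_of_forall_exists_mem_nhds fun β hβ =>
        exists_mem_nhds_dimH_inter_le hβ.1.1 (hcont₁ β hβ) (hcont₂ β hβ) hB hs
  have hcountable : (D₁ ∪ D₂).Countable :=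
    (countable_setOf_not_continuousAt_of_monotoneOn_toLex isOpen_Ioi
      strictMonoOn_toLex_quasiGreedyDigits_one.monotoneOn).union
      (countable_setOf_not_continuousAt_of_monotoneOn_toLex isOpen_Ioi monotoneOn_toLex_tauDigits)
  refine nonpos_iff_eq_zero.1 ((dimH_mono (subset_sdiff_union _ (D₁ ∪ D₂))).trans ?_)
  rw [dimH_union, hdimB, dimH_countable hcountable, max_self]

lemma tauDigits_eq_of_mem_connectedComponentIn (hβ : β ∈ tauPlateaus)
    (hβ' : β' ∈ connectedComponentIn tauPlateaus β) : tauDigits β' = tauDigits β :=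
  isPreconnected_connectedComponentIn.induction₂ (fun y z => tauDigits y = tauDigits z)
    (fun _ hy => ((connectedComponentIn_subset _ _ hy).2.filter_mono nhdsWithin_le_nhds).mono
      fun _ hz => hz.symm)
    (fun _ _ _ _ _ _ => Eq.trans) (fun _ _ _ _ => Eq.symm) hβ' (mem_connectedComponentIn hβ)

end Plateaus

/-- There is an open set `O ⊆ (1,∞)` whose complement in `(1,∞)` has
Hausdorff dimension zero, such that `τ` is real-analytic, strictly convex and strictly
decreasing on each connected component of `O`. -/
theorem tau_analytic_on_open_set :
    ∃ O : Set ℝ, IsOpen O ∧ O ⊆ Set.Ioi 1 ∧ dimH (Set.Ioi 1 \ O) = 0 ∧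
      ∀ x ∈ O,
        AnalyticOnNhd ℝ tau (connectedComponentIn O x) ∧
        StrictConvexOn ℝ (connectedComponentIn O x) tau ∧
        StrictAntiOn tau (connectedComponentIn O x) := by
  refine ⟨tauPlateaus, isOpen_tauPlateaus, tauPlateaus_subset_Ioi, dimH_Ioi_diff_tauPlateaus,
    fun x hx => ?_⟩
  set C := connectedComponentIn tauPlateaus x
  have hC : C ⊆ Ioi 1 := (connectedComponentIn_subset _ _).trans tauPlateaus_subset_Ioi
  have hconvex : Convex ℝ C := isPreconnected_connectedComponentIn.ordConnected.convex
  have heq : EqOn (fun β => valSeq β (tauDigits x)) tau C := fun β hβ => by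
    simp only [← tauDigits_eq_of_mem_connectedComponentIn hx hβ]
    exact valSeq_quasiGreedyDigits (hC hβ) (tau_mem_Ioc (hC hβ))
  have hbdd := quasiGreedyDigits_le_ceil (zero_lt_one.trans hx.1) (tau_mem_Ioc hx.1)
  obtain ⟨i, hi⟩ := exists_quasiGreedyDigits_ne_zero hx.1 (tau_mem_Ioc hx.1)
  exact ⟨((analyticOnNhd_valSeq hbdd).mono hC).congr isOpen_tauPlateaus.connectedComponentIn heq,
    ((strictConvexOn_valSeq hbdd hi).subset hC hconvex).congr heq,
    ((strictAntiOn_valSeq hbdd hi).mono hC).congr heq⟩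
end

section
/- Let s = s_1…s_m be an extended Farey word in F_e. Then (i) the lexicographically largest cyclic permutation of s is its reversal: L(s) = s_m s_{m−1} … s_1; and (ii) s^− is a palindrome, i.e. s_1 … s_{m−1}(s_m − 1) = (s_m − 1) s_{m−1} s_{m−2} … s_1. -/
open Set Filter MeasureTheory Topology

/-!
The Farey words are the Christoffel words: for `a / n` in lowest terms, the letters are the
increments of `⌊a i / n⌋`, emitted by the rotation by `a` modulo `n` along the orbit of `0`.
Concatenating Farey neighbours amounts to taking the mediant of their slopes, and `θ` raises the
slope by one.

Starting the orbit at `x` instead of `0` rotates the word, and since `a` is invertible modulo `n`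
every residue `x` occurs. The reflection `x ↦ -1 - x` shows that the reversed word starts at `-1`;
among all starting points this one makes the partial sums, hence the word, largest. Moreover the
letters at `x` and `x - 1` differ only if `n` divides `x` or `x + a`. Along the orbit of `0` this
happens only at the first and at the last letter, so reversal just moves one unit from the last
letter to the first.
-/

theorem ediv_eq_ediv_of_mul_eq {x y r m n : ℤ} (hm : 0 < m) (h : m * y = n * x + r)
    (hr₀ : 0 ≤ r) (hrn : r < n) : y / n = x / m := by
  have hn : 0 < n := hr₀.trans_lt hrn
  calc y / n = m * y / (m * n) := (Int.mul_ediv_mul_of_pos y n hm).symm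
    _ = m * y / n / m := by rw [mul_comm m n, Int.ediv_ediv_of_nonneg hn.le]
    _ = x / m := by
      rw [h, add_comm, Int.add_mul_ediv_left r x hn.ne', Int.ediv_eq_zero_of_lt hr₀ hrn, zero_add]

theorem neg_one_sub_ediv (x : ℤ) {n : ℤ} (hn : 0 < n) : (-1 - x) / n = -1 - x / n := by
  have hdiv := Int.mul_ediv_add_emod x n
  have h₀ := Int.emod_nonneg x hn.ne'
  have h₁ := Int.emod_lt_of_pos x hn
  rw [Int.ediv_eq_iff_of_pos hn]
  constructor <;> linarith

theorem ediv_eq_sub_one_ediv_add (x : ℤ) {n : ℤ} (hn : 0 < n) :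
    x / n = (x - 1) / n + if n ∣ x then 1 else 0 := by
  have hneg := Int.neg_ediv (a := x) (b := n)
  have hrefl := neg_one_sub_ediv (x - 1) hn
  rw [show -1 - (x - 1) = -x by ring] at hrefl
  rw [Int.sign_eq_one_of_pos hn] at hneg
  split_ifs at hneg ⊢ <;> omega

theorem monotone_ediv_natCast (n : ℕ) : Monotone fun x : ℤ => x / n := by
  intro x y hxy
  rcases n.eq_zero_or_pos with rfl | hn
  · simp
  · exact Int.ediv_le_ediv (by exact_mod_cast hn) hxy

theorem maxCyc_eq_rotate {w : List ℕ} {j : ℕ} (h : ∀ i, w.rotate i ≤ w.rotate j) :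
    maxCyc w = w.rotate j := by
  rcases eq_or_ne w [] with rfl | hw
  · simp [maxCyc]
  suffices ([] :: (List.range w.length).map w.rotate).max? = some (w.rotate j) from
    Option.some_injective _ this
  rw [List.max?_eq_some_iff]
  refine ⟨List.mem_cons_of_mem _ (List.mem_map.2 ⟨j % w.length, ?_, List.rotate_mod w j⟩), ?_⟩
  · exact List.mem_range.2 (Nat.mod_lt _ (List.length_pos_of_ne_nil hw))
  · simp only [List.mem_cons, List.mem_map, forall_eq_or_imp]
    refine ⟨not_lt.1 (List.not_lt_nil _), ?_⟩
    rintro _ ⟨i, -, rfl⟩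
    exact h i

theorem wminus_eq_mapIdx {w : List ℕ} (hw : w ≠ []) :
    wminus w = w.mapIdx fun i d => d - if i + 1 = w.length then 1 else 0 := by
  obtain ⟨l, d, rfl⟩ := (List.eq_nil_or_concat' w).resolve_left hw
  have hinit : l = l.mapIdx fun i d => d - if i = l.length then 1 else 0 := by
    refine List.ext_getElem (by simp) fun i hi _ => ?_
    simp [hi.ne]
  simpa [wminus, List.mapIdx_append] using hinit

theorem wminus_eq_reverse_of_getElem {w : List ℕ} (hw : w ≠ [])
    (h : ∀ i (hi : i < w.length),
      w[i] + (if i = 0 then 1 else 0) =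
        w.reverse[i]'(by simpa using hi) + if i + 1 = w.length then 1 else 0) :
    wminus w = (wminus w).reverse := by
  rw [wminus_eq_mapIdx hw]
  refine List.ext_getElem (by simp) fun i hi _ => ?_
  have hi : i < w.length := by simpa using hi
  have hend : w.length - 1 - i + 1 = w.length ↔ i = 0 := by omega
  have hletter := h i hi
  simp only [List.getElem_reverse, List.getElem_mapIdx, List.length_mapIdx, hend] at hletter ⊢
  split_ifs at hletter ⊢ <;> omega

theorem head?_fareyInsert (l : List (List ℕ)) : (fareyInsert l).head? = l.head? := by
  fun_cases fareyInsert l <;> rfl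

theorem isChain_fareyInsert {R : List ℕ → List ℕ → Prop} {l : List (List ℕ)}
    (hR : ∀ u v, R u v → R u (u ++ v) ∧ R (u ++ v) v) (hl : l.IsChain R) :
    (fareyInsert l).IsChain R := by
  induction l using fareyInsert.induct with
  | case1 => exact hl
  | case2 w => exact hl
  | case3 w v rest ih =>
    obtain ⟨hwv, hrest⟩ := List.isChain_cons_cons.1 hl
    obtain ⟨hleft, hright⟩ := hR w v hwv
    rw [fareyInsert, List.isChain_cons_cons, List.isChain_cons, head?_fareyInsert]
    simpa using ⟨hleft, hright, ih hrest⟩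

/-- The letter that the rotation by `a` modulo `n` emits at `x`: for `n > 0`, the number of
multiples of `n` in the interval `(x, x + a]`. The difference is never negative, so `toNat` does not
truncate. -/
def rotationLetter (a n : ℕ) (x : ℤ) : ℕ := ((x + a) / n - x / n).toNat

section rotationLetter

variable (a n : ℕ) (x : ℤ)

theorem rotationLetter_cast : (rotationLetter a n x : ℤ) = (x + a) / n - x / n :=
  Int.toNat_of_nonneg (sub_nonneg.2 (monotone_ediv_natCast n (by simp)))

theorem rotationLetter_add_mul (z : ℤ) : rotationLetter a n (x + n * z) = rotationLetter a n x := by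
  rcases n.eq_zero_or_pos with rfl | hn
  · simp [rotationLetter]
  have hn : (n : ℤ) ≠ 0 := by exact_mod_cast hn.ne'
  rw [rotationLetter, add_right_comm, Int.add_mul_ediv_left _ _ hn, Int.add_mul_ediv_left _ _ hn,
    add_sub_add_right_eq_sub, rotationLetter]

theorem rotationLetter_reflect : rotationLetter a n (-1 - x - a) = rotationLetter a n x := by
  rcases n.eq_zero_or_pos with rfl | hn
  · simp [rotationLetter]
  have hn : (0 : ℤ) < n := by exact_mod_cast hn
  rw [rotationLetter, rotationLetter, sub_add_cancel, sub_sub, neg_one_sub_ediv _ hn,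
    neg_one_sub_ediv _ hn, sub_sub_sub_cancel_left]

variable {n} (hn : 0 < n)
include hn

theorem rotationLetter_add_left : rotationLetter (a + n) n x = rotationLetter a n x + 1 := by
  have hshift : (x + a + n) / n = (x + a) / n + 1 := by
    simpa using Int.add_mul_ediv_left (x + a) 1 (b := n) (by exact_mod_cast hn.ne')
  zify
  rw [rotationLetter_cast, rotationLetter_cast, Nat.cast_add, ← add_assoc, hshift]
  ring

theorem rotationLetter_add_ite :
    rotationLetter a n x + (if (n : ℤ) ∣ x then 1 else 0) =
      rotationLetter a n (x - 1) + if (n : ℤ) ∣ x + a then 1 else 0 := by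
  have hn : (0 : ℤ) < n := by exact_mod_cast hn
  have hx := ediv_eq_sub_one_ediv_add x hn
  have hxa := ediv_eq_sub_one_ediv_add (x + a) hn
  zify
  rw [rotationLetter_cast, rotationLetter_cast, show x - 1 + a = x + a - 1 by ring]
  linarith

end rotationLetter

/-- The mechanical (or rotation) word with slope `a / n`, intercept `x / n` and `k` letters. -/
def mechanicalWord (a n k : ℕ) (x : ℤ) : List ℕ :=
  (List.range k).map fun i : ℕ => rotationLetter a n (x + a * i)

section mechanicalWord

variable (a n k : ℕ) (x : ℤ)

@[simp]
theorem length_mechanicalWord : (mechanicalWord a n k x).length = k := by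
  simp [mechanicalWord]

@[simp]
theorem getElem_mechanicalWord {i : ℕ} (hi : i < (mechanicalWord a n k x).length) :
    (mechanicalWord a n k x)[i] = rotationLetter a n (x + a * i) := by
  simp [mechanicalWord]

theorem mechanicalWord_append (l : ℕ) :
    mechanicalWord a n (k + l) x = mechanicalWord a n k x ++ mechanicalWord a n l (x + a * k) := by
  simp [mechanicalWord, List.range_add, mul_add, add_assoc, Function.comp_def]

theorem mechanicalWord_succ :
    mechanicalWord a n (k + 1) x = rotationLetter a n x :: mechanicalWord a n k (x + a) := by
  rw [add_comm k, mechanicalWord_append]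
  simp [mechanicalWord]

theorem rotate_mechanicalWord (j : ℕ) :
    (mechanicalWord a n n x).rotate j = mechanicalWord a n n (x + a * j) := by
  induction j with
  | zero => simp
  | succ j ih =>
    rcases n with _ | n
    · simp [mechanicalWord]
    have hwrap (y : ℤ) : rotationLetter a (n + 1) (y + a + a * n) = rotationLetter a (n + 1) y := by
      rw [← rotationLetter_add_mul a (n + 1) y a]
      push_cast
      ring_nf
    rw [← List.rotate_rotate, ih, mechanicalWord_succ, List.rotate_cons_succ, List.rotate_zero,
      show (x + a * (j + 1 : ℕ) : ℤ) = x + a * j + a by push_cast; ring,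
      mechanicalWord_append, ← hwrap]
    simp [mechanicalWord]

theorem reverse_mechanicalWord :
    (mechanicalWord a n k x).reverse = mechanicalWord a n k (-1 - x - a * k) := by
  refine List.ext_getElem (by simp) fun i hi _ => ?_
  have hik : i + 1 ≤ k := by simpa using hi
  rw [List.getElem_reverse, getElem_mechanicalWord, getElem_mechanicalWord,
    ← rotationLetter_reflect, length_mechanicalWord, Nat.sub_sub, add_comm 1 i, Nat.cast_sub hik]
  push_cast
  ring_nf

variable {n k x}

theorem mechanicalWord_le_mechanicalWord {y : ℤ} (hxy : x ≤ y) (hdiv : x / n = y / n) :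
    mechanicalWord a n k x ≤ mechanicalWord a n k y := by
  induction k generalizing x y with
  | zero => exact le_rfl
  | succ k ih =>
    rw [mechanicalWord_succ, mechanicalWord_succ]
    have hxy' : x + a ≤ y + a := by gcongr
    have hdiv' : (x + a) / n ≤ (y + a) / n := monotone_ediv_natCast n hxy'
    rcases hdiv'.lt_or_eq with hlt | heq
    · refine le_of_lt (List.Lex.rel ?_)
      zify
      rw [rotationLetter_cast, rotationLetter_cast, hdiv]
      exact sub_lt_sub_right hlt _
    · rw [rotationLetter, rotationLetter, hdiv, heq]
      exact List.cons_le_cons _ (ih hxy' heq)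

theorem mechanicalWord_congr {y : ℤ} (h : x ≡ y [ZMOD n]) :
    mechanicalWord a n k x = mechanicalWord a n k y := by
  obtain ⟨z, rfl⟩ := Int.modEq_iff_add_fac.1 h
  simp only [mechanicalWord, add_right_comm x (n * z), rotationLetter_add_mul]

theorem mechanicalWord_le_mechanicalWord_neg_one (hn : 0 < n) :
    mechanicalWord a n k x ≤ mechanicalWord a n k (-1) := by
  have hn : (0 : ℤ) < n := by exact_mod_cast hn
  have hlt := Int.emod_lt_of_pos x hn
  have hlast : (n - 1 : ℤ) ≡ -1 [ZMOD n] := Int.modEq_iff_add_fac.2 ⟨-1, by ring⟩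
  calc mechanicalWord a n k x = mechanicalWord a n k (x % n) :=
        mechanicalWord_congr a (Int.mod_modEq x n).symm
    _ ≤ mechanicalWord a n k (n - 1) := by
        refine mechanicalWord_le_mechanicalWord a (by omega) ?_
        rw [Int.ediv_eq_zero_of_lt (Int.emod_nonneg x hn.ne') hlt,
          Int.ediv_eq_zero_of_lt (by omega) (by omega)]
    _ = mechanicalWord a n k (-1) := mechanicalWord_congr a hlast

variable {a}

theorem mechanicalWord_eq_of_ediv_eq_add {b m : ℕ} {y c : ℤ}
    (h : ∀ i : ℕ, i ≤ k → (x + a * i) / n = (y + b * i) / m + c) :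
    mechanicalWord a n k x = mechanicalWord b m k y := by
  refine List.map_congr_left fun i hi => ?_
  have hi : i < k := List.mem_range.1 hi
  have hsucc := h (i + 1) hi
  push_cast [mul_add, mul_one, ← add_assoc] at hsucc
  rw [rotationLetter, rotationLetter, h i hi.le, hsucc, add_sub_add_right_eq_sub]

theorem theta_mechanicalWord (hn : 0 < n) :
    theta (mechanicalWord a n k x) = mechanicalWord (a + n) n k x := by
  refine List.ext_getElem (by simp [theta]) fun i _ _ => ?_
  rw [getElem_mechanicalWord, rotationLetter_add_left _ _ hn, Nat.cast_add, add_mul, ← add_assoc,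
    rotationLetter_add_mul]
  simp [theta]

end mechanicalWord

/-- The lower Christoffel word of slope `a / n`, with `n` letters summing to `a`. -/
def christoffel (a n : ℕ) : List ℕ := mechanicalWord a n n 0

@[simp]
theorem length_christoffel (a n : ℕ) : (christoffel a n).length = n :=
  length_mechanicalWord a n n 0

theorem getElem_christoffel (a n : ℕ) {i : ℕ} (hi : i < (christoffel a n).length) :
    (christoffel a n)[i] = rotationLetter a n (a * i) := by
  simp [christoffel]

theorem reverse_christoffel (a n : ℕ) :
    (christoffel a n).reverse = mechanicalWord a n n (-1) := by
  rw [christoffel, reverse_mechanicalWord]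
  exact mechanicalWord_congr a (by simp [Int.modEq_iff_dvd])

theorem christoffel_append {a n b m : ℕ} (hn : 0 < n) (hm : 0 < m) (h : b * n = a * m + 1) :
    christoffel a n ++ christoffel b m = christoffel (a + b) (n + m) := by
  zify at hn hm h
  have hleft : mechanicalWord (a + b) (n + m) n 0 = christoffel a n := by
    refine mechanicalWord_eq_of_ediv_eq_add (c := 0) fun i hi => ?_
    rw [add_zero]
    refine ediv_eq_ediv_of_mul_eq (r := i) hn ?_ (by positivity) (by push_cast; omega)
    push_cast
    linear_combination (i : ℤ) * h
  have hright : mechanicalWord (a + b) (n + m) m (0 + (a + b : ℕ) * n) = christoffel b m := by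
    refine mechanicalWord_eq_of_ediv_eq_add (c := a) fun i hi => ?_
    have hsplit : 0 + ((a + b : ℕ) : ℤ) * n + (a + b : ℕ) * i
        = ((a + b) * i + 1) + (n + m : ℕ) * a := by
      push_cast
      linear_combination h
    rw [hsplit, Int.add_mul_ediv_left _ _ (by push_cast; omega)]
    congr 1
    refine ediv_eq_ediv_of_mul_eq (r := m - i) hm ?_ (by omega) (by push_cast; omega)
    push_cast
    linear_combination (-i : ℤ) * h
  rw [← hleft, ← hright, ← mechanicalWord_append, christoffel]

theorem maxCyc_christoffel {a n : ℕ} (hn : 0 < n) (h : a.Coprime n) :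
    maxCyc (christoffel a n) = (christoffel a n).reverse := by
  obtain ⟨j, -, hj⟩ := Nat.exists_mul_mod_eq_of_coprime (n - 1) h hn.ne'
  have hj : (0 + a * j : ℤ) ≡ -1 [ZMOD n] := by
    calc (0 + a * j : ℤ) = (a * j : ℕ) := by push_cast; ring
      _ ≡ (n - 1 : ℕ) [ZMOD n] := Int.natCast_modEq_iff.2 hj
      _ ≡ -1 [ZMOD n] := Int.modEq_iff_add_fac.2 ⟨-1, by push_cast [Nat.cast_pred hn]; ring⟩
  have hrot : (christoffel a n).rotate j = (christoffel a n).reverse := by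
    rw [reverse_christoffel, christoffel, rotate_mechanicalWord, mechanicalWord_congr a hj]
  rw [← hrot]
  refine maxCyc_eq_rotate fun i => ?_
  rw [hrot, reverse_christoffel, christoffel, rotate_mechanicalWord]
  exact mechanicalWord_le_mechanicalWord_neg_one a hn

theorem getElem_christoffel_add_ite {a n i : ℕ} (h : a.Coprime n)
    (hi : i < (christoffel a n).length) :
    (christoffel a n)[i] + (if i = 0 then 1 else 0) =
      (christoffel a n).reverse[i]'(by simpa using hi) +
        if i + 1 = (christoffel a n).length then 1 else 0 := by
  rw [length_christoffel] at hi
  have hdvd (k : ℕ) : (n : ℤ) ∣ a * k ↔ n ∣ k := by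
    norm_cast
    exact h.symm.dvd_mul_left
  have hfirst : (n : ℤ) ∣ a * i ↔ i = 0 := by
    rw [hdvd]
    exact ⟨fun hni => Nat.eq_zero_of_dvd_of_lt hni hi, fun hi₀ => hi₀ ▸ dvd_zero n⟩
  have hlast : (n : ℤ) ∣ a * i + a ↔ i + 1 = n := by
    rw [← mul_add_one, ← Nat.cast_succ, hdvd]
    exact ⟨fun hni => le_antisymm hi (Nat.le_of_dvd i.succ_pos hni), fun hin => hin ▸ dvd_rfl⟩
  have hletter := rotationLetter_add_ite a (a * i) (Nat.zero_lt_of_lt hi)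
  simp only [hfirst, hlast] at hletter
  simpa only [reverse_christoffel, getElem_mechanicalWord, getElem_christoffel, length_christoffel,
    neg_add_eq_sub] using hletter

theorem wminus_christoffel_eq_reverse {a n : ℕ} (hn : 0 < n) (h : a.Coprime n) :
    wminus (christoffel a n) = (wminus (christoffel a n)).reverse :=
  wminus_eq_reverse_of_getElem (List.ne_nil_of_length_pos (by simpa using hn))
    fun _ => getElem_christoffel_add_ite h

/-- Christoffel words of slopes `a / n < b / m` that are Farey neighbours (`b n - a m = 1`). -/
def FareyNeighbours (u v : List ℕ) : Prop :=
  ∃ a n b m, 0 < n ∧ 0 < m ∧ b * n = a * m + 1 ∧ u = christoffel a n ∧ v = christoffel b m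

/-- A Christoffel word whose slope is in lowest terms. -/
def IsChristoffel (w : List ℕ) : Prop := ∃ a n, 0 < n ∧ a.Coprime n ∧ w = christoffel a n

namespace FareyNeighbours

variable {u v : List ℕ}

theorem append_right (h : FareyNeighbours u v) : FareyNeighbours u (u ++ v) := by
  obtain ⟨a, n, b, m, hn, hm, h, rfl, rfl⟩ := h
  exact ⟨a, n, a + b, n + m, hn, by omega, by linarith, rfl, christoffel_append hn hm h⟩

theorem append_left (h : FareyNeighbours u v) : FareyNeighbours (u ++ v) v := by
  obtain ⟨a, n, b, m, hn, hm, h, rfl, rfl⟩ := h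
  exact ⟨a + b, n + m, b, m, by omega, hm, by linarith, christoffel_append hn hm h, rfl⟩

theorem isChristoffel_right (h : FareyNeighbours u v) : IsChristoffel v := by
  obtain ⟨a, n, b, m, -, hm, h, -, rfl⟩ := h
  refine ⟨b, m, hm, Nat.isCoprime_iff_coprime.1 ⟨n, -a, ?_⟩, rfl⟩
  zify at h
  linear_combination h

end FareyNeighbours

theorem head?_fareyLevel (n : ℕ) : (fareyLevel n).head? = some [0] := by
  induction n with
  | zero => rfl
  | succ n ih => rw [fareyLevel, head?_fareyInsert, ih]

theorem isChain_fareyLevel (n : ℕ) : (fareyLevel n).IsChain FareyNeighbours := by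
  induction n with
  | zero =>
    exact List.isChain_pair.2 ⟨0, 1, 1, 1, one_pos, one_pos, rfl, by decide, by decide⟩
  | succ n ih => exact isChain_fareyInsert (fun _ _ h => ⟨h.append_right, h.append_left⟩) ih

theorem isChristoffel_of_mem_fareyLevel {n : ℕ} {w : List ℕ} (hw : w ∈ fareyLevel n) :
    IsChristoffel w := by
  refine (isChain_fareyLevel n).induction _ _ (fun u v huv _ => huv.isChristoffel_right)
    (fun hne => ?_) w hw
  rw [List.head_eq_iff_head?_eq_some hne |>.2 (head?_fareyLevel n)]
  exact ⟨0, 1, one_pos, Nat.coprime_one_right 0, by decide⟩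

theorem IsChristoffel.theta {w : List ℕ} (hw : IsChristoffel w) : IsChristoffel (theta w) := by
  obtain ⟨a, n, hn, h, rfl⟩ := hw
  exact ⟨a + n, n, hn, by simpa using h, theta_mechanicalWord hn⟩

theorem isChristoffel_of_mem_fareyExt {s : List ℕ} (hs : s ∈ FareyExt) : IsChristoffel s := by
  obtain ⟨v, hv, k, rfl⟩ := hs
  have hv : IsChristoffel v := by
    rcases hv with ⟨⟨n, hn⟩, -⟩ | rfl
    · exact isChristoffel_of_mem_fareyLevel hn
    · exact isChristoffel_of_mem_fareyLevel (n := 0) (by simp [fareyLevel])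
  exact Function.Iterate.rec IsChristoffel hv (fun _ => IsChristoffel.theta) k

/-- For an extended Farey word `s = s₁…s_m ∈ F_e`: (i) the
lexicographically largest cyclic permutation of `s` is its reversal, and (ii) `s⁻`
is a palindrome. -/
theorem fareyExt_palindrome (s : List ℕ) (hs : s ∈ FareyExt) :
    maxCyc s = s.reverse ∧ wminus s = (wminus s).reverse := by
  obtain ⟨a, n, hn, h, rfl⟩ := isChristoffel_of_mem_fareyExt hs
  exact ⟨maxCyc_christoffel hn h, wminus_christoffel_eq_reverse hn h⟩
end
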